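/- Sharp threshold for random geometric 2-SAT: fix an integer d ≥ 1. For every ε > 0: (a) if 0 < γ ≤ 2^{-(1+1/d)} - ε, then the probability that the random formula F_2(n,γ) is satisfiable tends to 1 as n → ∞; (b) if γ ≥ 2^{-(1+1/d)} + ε, then the probability that F_2(n,γ) is satisfiable tends to 0 as n → ∞. -/

import Mathlib

/-!
A clause `a ∨ b` is read as the implications `¬a → b` and `¬b → a`. A literal sees on average
`c = 2n (2r)^d` other literals at distance at most `r`, and for `r = γ n^(-1/d)` this is
`c = 2 (2γ)^d`, which equals `1` at the threshold. Whatever the dimension, the edges of a path of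
implications `¬z₀ z₁, ¬z₁ z₂, …` through distinct variables form a matching of pairs of literals, so
that up to boundary effects the edges are independent events; geometry only enters through the measure
of balls.

Below the threshold, an unsatisfiable formula contains a walk `z₀ → ⋯ → zₛ = ¬z₀ → ⋯ → zₘ` in the
implication digraph whose last literal repeats a variable and which is otherwise free of repetitions
(`exists_bad_walk`). There are at most `2 m² (2n)^(m-1)` such walks, each of probability at most
`(2r)^(dm)`, and the sum over `m` is `O(1/n)` (`unsat_le`, `subcritical`).

Above the threshold, a small fraction of the variables is set aside in blocks of three, keeping the
value of `c` for the remaining main literals above `1`. For two end points `e 0`, `e 1`, consider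
the number of induced paths of length `m ≈ log n` through main literals joining them. Given one
induced path, a pair of points on it is either an edge or excluded, and every other pair has
conditional probability at most `p = (2r)^d` as long as one of its points is fresh (`ind_path_le`).
Hence the expected number of other paths is governed by a linear recursion (`tot_bound`), which gives
the second moment of the conditional mean given the main literals (`second_moment_one`) and the second
moment for fixed end points (`second_moment_two`). By Chebyshev's and Cauchy–Schwarz's inequalities,
with high probability the placement of the main literals is such that a random pair of points is joined
by a path with probability at least of order `m^(-3)` (`support_large`). Given that placement, the blocks
are independent, and a block with variables `w₁, w₂, w₃` has probability at least the fourth power of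
this (`star_ge`, `badBlock_ge`) to have paths from `w₂` to `w₁` and to `¬w₁`, and from `¬w₂` to `w₃`
and to `¬w₃`. Such a block is contradictory (`not_badBlock_of_sat`), and as the number of blocks is
linear in `n`, one of them is contradictory with high probability (`sat_bound`, `supercritical`).
-/

open MeasureTheory Filter

/-- The uniform (Lebesgue) measure on the unit cube `[0,1]^d`. -/
noncomputable def unitCubeMeasure (d : ℕ) : Measure (Fin d → ℝ) :=
  volume.restrict (Set.Icc 0 1)

instance (d : ℕ) : SigmaFinite (unitCubeMeasure d) := by
  unfold unitCubeMeasure; infer_instance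

/-- The distribution of a placement of the `2n` literals (pairs `(v,s)` with `v` a variable
and `s` a sign) at independent uniform points of the cube `[0,1]^d`. -/
noncomputable def placementMeasure (d n : ℕ) : Measure ((Fin n × Bool) → (Fin d → ℝ)) :=
  Measure.pi fun _ => unitCubeMeasure d

/-- The geometric `k`-SAT formula determined by the placement `ω` (with radius `r` in the
`ℓ∞` distance) is satisfiable: some assignment `α` makes at least one literal of every
clause true, where a clause is formed from every set of `k` literals lying pairwise within
distance `r`. -/
def GeomSatisfiable (d k n : ℕ) (r : ℝ) (ω : (Fin n × Bool) → (Fin d → ℝ)) : Prop :=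
  ∃ α : Fin n → Bool, ∀ S : Finset (Fin n × Bool), S.card = k →
    (∀ l₁ ∈ S, ∀ l₂ ∈ S, dist (ω l₁) (ω l₂) ≤ r) →
    ∃ l ∈ S, α l.1 = l.2

open scoped ENNReal
set_option linter.unusedSectionVars false

/-! ### Revealing independent points one at a time -/

section Step
variable {X : Type*} [PseudoMetricSpace X] [MeasurableSpace X] [OpensMeasurableSpace X]
  [SecondCountableTopology X]
variable {I : Type*} [Fintype I] [DecidableEq I] (μ : Measure X) [IsProbabilityMeasure μ]

lemma measurableSet_near (r : ℝ) (x y : I) :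
    MeasurableSet {ω : I → X | dist (ω x) (ω y) ≤ r} :=
  measurableSet_le ((measurable_pi_apply x).dist (measurable_pi_apply y)) measurable_const

/-- Integrating out the point `x` first: it does not affect `E`, so the pair `{x, y}` contributes the
measure of the ball around the point `y`. -/
lemma pi_step (r : ℝ) (E : Set (I → X)) (hE : MeasurableSet E) (x y : I) (hxy : x ≠ y)
    (hinv : ∀ ω t, Function.update ω x t ∈ E ↔ ω ∈ E) :
    Measure.pi (fun _ : I => μ) (E ∩ {ω | dist (ω x) (ω y) ≤ r}) =
      ∫⁻ ω in E, μ (Metric.closedBall (ω y) r) ∂(Measure.pi fun _ : I => μ) := by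
  have hM := hE.inter (measurableSet_near (X := X) r x y)
  set F : (I → X) → ℝ≥0∞ := (E ∩ {ω | dist (ω x) (ω y) ≤ r}).indicator 1 with hF
  have hFm : Measurable F := measurable_one.indicator hM
  have key : ∀ ω : I → X, ∫⁻ t, F (Function.update ω x t) ∂μ
      = E.indicator (fun ω => μ (Metric.closedBall (ω y) r)) ω := by
    intro ω
    by_cases h : ω ∈ E
    · rw [Set.indicator_of_mem h, ← lintegral_indicator_one Metric.isClosed_closedBall.measurableSet]
      refine lintegral_congr fun t => ?_
      simp only [hF, Set.indicator, Set.mem_inter_iff, hinv, h, Set.mem_ofPred_eq,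
        Function.update_self, Function.update_of_ne hxy.symm, true_and, Metric.mem_closedBall, Pi.one_apply]
    · rw [Set.indicator_of_notMem h]
      rw [lintegral_eq_zero_of_ae_eq_zero]
      refine ae_of_all _ fun t => ?_
      simp [hF, hinv, h]
  obtain ⟨a⟩ : Nonempty X := by
    by_contra hn
    rw [not_nonempty_iff] at hn
    have := measure_univ (μ := μ)
    rw [Set.univ_eq_empty_iff.2 hn] at this
    simp at this
  have hGm : Measurable (fun ω : I → X => ∫⁻ t, F (Function.update ω x t) ∂μ) := by
    have : Measurable (fun q : (I → X) × X => F (Function.update q.1 x q.2)) :=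
      hFm.comp measurable_update'
    exact this.lintegral_prod_right'
  rw [← lintegral_indicator hE, ← lintegral_indicator_one hM, ← hF]
  simp_rw [← key]
  rw [lintegral_eq_lmarginal_univ (fun _ => a), lintegral_eq_lmarginal_univ (fun _ => a),
    lmarginal_erase' _ hFm (Finset.mem_univ x), lmarginal_erase' _ hGm (Finset.mem_univ x)]
  simp

lemma pi_step_le (r : ℝ) (p : ℝ≥0∞) (hp : ∀ a, μ (Metric.closedBall a r) ≤ p)
    (E : Set (I → X)) (hE : MeasurableSet E) (x y : I) (hxy : x ≠ y)
    (hinv : ∀ ω t, Function.update ω x t ∈ E ↔ ω ∈ E) :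
    Measure.pi (fun _ : I => μ) (E ∩ {ω | dist (ω x) (ω y) ≤ r}) ≤
      Measure.pi (fun _ : I => μ) E * p := by
  rw [pi_step μ r E hE x y hxy hinv]
  calc _ ≤ ∫⁻ ω in E, p ∂(Measure.pi fun _ : I => μ) := lintegral_mono fun ω => hp _
    _ = _ := by simp [mul_comm]

lemma pi_step_ge (r : ℝ) (p : ℝ≥0∞)
    (E : Set (I → X)) (hE : MeasurableSet E) (x y : I) (hxy : x ≠ y)
    (hp : ∀ ω ∈ E, p ≤ μ (Metric.closedBall (ω y) r))
    (hinv : ∀ ω t, Function.update ω x t ∈ E ↔ ω ∈ E) :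
    Measure.pi (fun _ : I => μ) E * p ≤
    Measure.pi (fun _ : I => μ) (E ∩ {ω | dist (ω x) (ω y) ≤ r}) := by
  rw [pi_step μ r E hE x y hxy hinv]
  calc _ = ∫⁻ ω in E, p ∂(Measure.pi fun _ : I => μ) := by simp [mul_comm]
    _ ≤ _ := setLIntegral_mono' hE hp

/-- Edges `(x j, y j)`, `j ∈ s`, each with an endpoint `x j` that occurs in no other edge and on
which the event `E` does not depend. -/
lemma pi_star_le {J : Type*} [DecidableEq J] (r : ℝ) (p : ℝ≥0∞)
    (hp : ∀ a, μ (Metric.closedBall a r) ≤ p)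
    (E : Set (I → X)) (hE : MeasurableSet E) (x y : J → I) (s : Finset J)
    (hx : Set.InjOn x s) (hxy : ∀ j ∈ s, ∀ k ∈ s, x j ≠ y k)
    (hinv : ∀ j ∈ s, ∀ ω t, Function.update ω (x j) t ∈ E ↔ ω ∈ E) :
    Measure.pi (fun _ : I => μ) (E ∩ {ω | ∀ j ∈ s, dist (ω (x j)) (ω (y j)) ≤ r}) ≤
      Measure.pi (fun _ : I => μ) E * p ^ s.card := by
  induction s using Finset.induction_on with
  | empty => simp
  | insert a s ha ih =>
    have h1 := ih (hx.mono (by simp)) (fun j hj k hk => hxy j (by simp [hj]) k (by simp [hk]))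
      (fun j hj => hinv j (by simp [hj]))
    have hset : E ∩ {ω : I → X | ∀ j ∈ insert a s, dist (ω (x j)) (ω (y j)) ≤ r} =
        (E ∩ {ω | ∀ j ∈ s, dist (ω (x j)) (ω (y j)) ≤ r}) ∩
          {ω | dist (ω (x a)) (ω (y a)) ≤ r} := by
      ext ω; simp; tauto
    rw [hset, Finset.card_insert_of_notMem ha, pow_succ, ← mul_assoc]
    refine (pi_step_le μ r p hp _ ?_ _ _ (hxy a (by simp) a (by simp)) ?_).trans
      (mul_le_mul_left h1 p)
    · refine hE.inter ?_
      have : {ω : I → X | ∀ j ∈ s, dist (ω (x j)) (ω (y j)) ≤ r} =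
        ⋂ j ∈ s, {ω | dist (ω (x j)) (ω (y j)) ≤ r} := by ext; simp
      rw [this]
      exact Finset.measurableSet_biInter _ fun j _ => measurableSet_near r _ _
    · intro ω t
      simp only [Set.mem_inter_iff, hinv a (by simp), Set.mem_ofPred_eq]
      refine and_congr_right fun _ => forall₂_congr fun j hj => ?_
      rw [Function.update_of_ne, Function.update_of_ne]
      · exact (hxy a (by simp) j (by simp [hj])).symm
      · intro h
        exact ha (by rw [← hx (by simp [hj]) (by simp) h]; exact hj)

lemma pi_star_ge {J : Type*} [DecidableEq J] (r : ℝ) (p : ℝ≥0∞)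
    (E : Set (I → X)) (hE : MeasurableSet E) (x y : J → I) (s : Finset J)
    (hp : ∀ ω ∈ E, ∀ j ∈ s, p ≤ μ (Metric.closedBall (ω (y j)) r))
    (hx : Set.InjOn x s) (hxy : ∀ j ∈ s, ∀ k ∈ s, x j ≠ y k)
    (hinv : ∀ j ∈ s, ∀ ω t, Function.update ω (x j) t ∈ E ↔ ω ∈ E) :
    Measure.pi (fun _ : I => μ) E * p ^ s.card ≤
      Measure.pi (fun _ : I => μ) (E ∩ {ω | ∀ j ∈ s, dist (ω (x j)) (ω (y j)) ≤ r}) := by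
  induction s using Finset.induction_on with
  | empty => simp
  | insert a s ha ih =>
    have h1 := ih (fun ω h j hj => hp ω h j (by simp [hj])) (hx.mono (by simp))
      (fun j hj k hk => hxy j (by simp [hj]) k (by simp [hk]))
      (fun j hj => hinv j (by simp [hj]))
    have hset : E ∩ {ω : I → X | ∀ j ∈ insert a s, dist (ω (x j)) (ω (y j)) ≤ r} =
        (E ∩ {ω | ∀ j ∈ s, dist (ω (x j)) (ω (y j)) ≤ r}) ∩
          {ω | dist (ω (x a)) (ω (y a)) ≤ r} := by
      ext ω; simp; tauto
    rw [hset, Finset.card_insert_of_notMem ha, pow_succ, ← mul_assoc]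
    refine (mul_le_mul_left h1 p).trans
      (pi_step_ge μ r p _ ?_ _ _ (hxy a (by simp) a (by simp)) ?_ ?_)
    · refine hE.inter ?_
      have : {ω : I → X | ∀ j ∈ s, dist (ω (x j)) (ω (y j)) ≤ r} =
        ⋂ j ∈ s, {ω | dist (ω (x j)) (ω (y j)) ≤ r} := by ext; simp
      rw [this]
      exact Finset.measurableSet_biInter _ fun j _ => measurableSet_near r _ _
    · exact fun ω h => hp ω h.1 a (by simp)
    · intro ω t
      simp only [Set.mem_inter_iff, hinv a (by simp), Set.mem_ofPred_eq]
      refine and_congr_right fun _ => forall₂_congr fun j hj => ?_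
      rw [Function.update_of_ne, Function.update_of_ne]
      · exact (hxy a (by simp) j (by simp [hj])).symm
      · intro h
        exact ha (by rw [← hx (by simp [hj]) (by simp) h]; exact hj)

end Step

/-! ### Implications and the 2-SAT criterion -/

section TwoSat
variable {n : ℕ}

/-- The negation of a literal. -/
def lneg (a : Fin n × Bool) : Fin n × Bool := (a.1, !a.2)

@[simp] lemma lneg_lneg (a : Fin n × Bool) : lneg (lneg a) = a := by simp [lneg]
@[simp] lemma lneg_fst (a : Fin n × Bool) : (lneg a).1 = a.1 := rfl
lemma lneg_ne (a : Fin n × Bool) : lneg a ≠ a := by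
  intro h; have := congrArg Prod.snd h; simp [lneg] at this
lemma lneg_injective : Function.Injective (lneg (n := n)) :=
  Function.LeftInverse.injective lneg_lneg
lemma eq_or_eq_lneg {a b : Fin n × Bool} (h : a.1 = b.1) : a = b ∨ a = lneg b := by
  obtain ⟨v, s⟩ := a; obtain ⟨w, t⟩ := b
  cases s <;> cases t <;> simp_all [lneg]

variable (adj : Fin n × Bool → Fin n × Bool → Prop)

/-- The implication digraph of a set of two-literal clauses `adj`: the clause `a ∨ b` is read as
`¬a → b`. -/
def Imp (a b : Fin n × Bool) : Prop := adj (lneg a) b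

variable {adj}

lemma imp_contra (hs : ∀ a b, adj a b → adj b a) {a b : Fin n × Bool}
    (h : Relation.ReflTransGen (Imp adj) a b) :
    Relation.ReflTransGen (Imp adj) (lneg b) (lneg a) := by
  induction h with
  | refl => exact .refl
  | tail _ h ih =>
    refine Relation.ReflTransGen.head ?_ ih
    unfold Imp at *
    rw [lneg_lneg]
    exact hs _ _ h

/-- The 2-SAT criterion: if no literal is equivalent to its negation in the implication digraph,
all clauses can be satisfied. A maximal consistent set of literals closed under implication decides
every variable. -/
lemma two_sat (hs : ∀ a b, adj a b → adj b a)
    (h : ∀ x, ¬ (Relation.ReflTransGen (Imp adj) x (lneg x) ∧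
      Relation.ReflTransGen (Imp adj) (lneg x) x)) :
    ∃ α : Fin n → Bool, ∀ a b, adj a b → α a.1 = a.2 ∨ α b.1 = b.2 := by
  classical
  let G : Set (Set (Fin n × Bool)) :=
    {T | (∀ a ∈ T, ∀ b, Imp adj a b → b ∈ T) ∧ ∀ a ∈ T, lneg a ∉ T}
  obtain ⟨T, hT, hmax⟩ := (Set.toFinite G).exists_maximal ⟨∅, by simp [G]⟩
  have hclosed : ∀ a ∈ T, ∀ b, Relation.ReflTransGen (Imp adj) a b → b ∈ T := by
    intro a ha b hab
    induction hab with
    | refl => exact ha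
    | tail _ h ih => exact hT.1 _ ih _ h
  -- A literal undecided by `T` that does not imply its negation could be added to `T`, together with
  -- all its consequences.
  have htotal : ∀ x, x ∈ T ∨ lneg x ∈ T := by
    intro x
    by_contra! hx
    obtain ⟨l, hl1, hl2, hl⟩ : ∃ l, l ∉ T ∧ lneg l ∉ T ∧
        ¬ Relation.ReflTransGen (Imp adj) l (lneg l) := by
      by_cases h1 : Relation.ReflTransGen (Imp adj) x (lneg x)
      · exact ⟨lneg x, hx.2, by simpa using hx.1, by simpa using fun h2 => h x ⟨h1, h2⟩⟩
      · exact ⟨x, hx.1, hx.2, h1⟩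
    have hG : T ∪ {b | Relation.ReflTransGen (Imp adj) l b} ∈ G := by
      refine ⟨?_, ?_⟩
      · rintro a (ha | ha) b hab
        · exact Or.inl (hT.1 a ha b hab)
        · exact Or.inr (Relation.ReflTransGen.tail ha hab)
      · rintro a (ha | ha) (hb | hb)
        · exact hT.2 a ha hb
        · have := imp_contra hs hb
          rw [lneg_lneg] at this
          exact hl2 (hclosed a ha _ this)
        · have := imp_contra hs (show Relation.ReflTransGen (Imp adj) l a from ha)
          exact hl2 (hclosed _ hb _ this)
        · have := imp_contra hs (show Relation.ReflTransGen (Imp adj) l (lneg a) from hb)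
          rw [lneg_lneg] at this
          exact hl (Relation.ReflTransGen.trans ha this)
    exact hl1 (hmax hG Set.subset_union_left (Or.inr Relation.ReflTransGen.refl))
  refine ⟨fun v => decide ((v, true) ∈ T), fun a b hab => ?_⟩
  have hval : ∀ c ∈ T, decide ((c.1, true) ∈ T) = c.2 := by
    rintro ⟨v, s⟩ hc
    cases s
    · have := hT.2 _ hc
      simpa [lneg] using this
    · simpa using hc
  rcases htotal a with ha | ha
  · exact Or.inl (hval a ha)
  · refine Or.inr (hval b (hT.1 _ ha b ?_))
    simpa [Imp] using hab

/-- `z` is a walk with `k` steps from `a` to `b` in the implication digraph. -/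
def IsWalk (adj : Fin n × Bool → Fin n × Bool → Prop) (k : ℕ) (a b : Fin n × Bool)
    (z : ℕ → Fin n × Bool) : Prop :=
  z 0 = a ∧ z k = b ∧ ∀ i < k, Imp adj (z i) (z (i + 1))

lemma IsWalk.reach {k : ℕ} {a b : Fin n × Bool} {z : ℕ → Fin n × Bool} (h : IsWalk adj k a b z)
    {i j : ℕ} (hij : i ≤ j) (hj : j ≤ k) : Relation.ReflTransGen (Imp adj) (z i) (z j) := by
  induction j, hij using Nat.le_induction with
  | base => exact .refl
  | succ j hij ih => exact (ih (by omega)).tail (h.2.2 j (by omega))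

lemma IsWalk.append {k l : ℕ} {a b c : Fin n × Bool} {z y : ℕ → Fin n × Bool}
    (hz : IsWalk adj k a b z) (hy : IsWalk adj l b c y) :
    IsWalk adj (k + l) a c (fun i => if i ≤ k then z i else y (i - k)) := by
  obtain ⟨z0, zk, hz⟩ := hz
  obtain ⟨y0, yl, hy⟩ := hy
  refine ⟨by simp [z0], ?_, ?_⟩
  · by_cases hl : l = 0
    · subst hl; simp [zk, ← yl, y0]
    · simp [hl, yl]
  · intro i hi
    by_cases h1 : i + 1 ≤ k
    · simpa [h1, show i ≤ k by omega] using hz i (by omega)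
    · by_cases h2 : i = k
      · subst h2
        simpa [zk, ← y0] using hy 0 (by omega)
      · have := hy (i - k) (by omega)
        simpa [h1, show ¬ i ≤ k by omega, show i + 1 - k = i - k + 1 by omega] using this

lemma IsWalk.sub {k : ℕ} {a b : Fin n × Bool} {z : ℕ → Fin n × Bool} (h : IsWalk adj k a b z)
    {i j : ℕ} (hij : i ≤ j) (hj : j ≤ k) :
    IsWalk adj (j - i) (z i) (z j) (fun t => z (i + t)) :=
  ⟨rfl, by simp [show i + (j - i) = j by omega], fun t ht => h.2.2 (i + t) (by omega)⟩

lemma exists_isWalk {a b : Fin n × Bool} (h : Relation.ReflTransGen (Imp adj) a b) :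
    ∃ k z, IsWalk adj k a b z := by
  induction h with
  | refl => exact ⟨0, fun _ => a, rfl, rfl, by simp⟩
  | @tail b c _ h ih =>
    obtain ⟨k, z, hz⟩ := ih
    exact ⟨k + 1, _, hz.append (y := fun i => if i = 0 then b else c)
      ⟨by simp, by simp, by simpa using h⟩⟩

/-- An unsatisfiable system contains a walk `z 0 → ⋯ → z s = ¬ z 0 → ⋯ → z m` whose last literal
repeats an earlier variable, all other variables being distinct. -/
lemma exists_bad_walk {x : Fin n × Bool}
    (h1 : Relation.ReflTransGen (Imp adj) x (lneg x))
    (h2 : Relation.ReflTransGen (Imp adj) (lneg x) x) :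
    ∃ (m s : ℕ) (z : ℕ → Fin n × Bool), 0 < s ∧ s < m ∧ (∀ i < m, Imp adj (z i) (z (i + 1))) ∧
      z s = lneg (z 0) ∧ (∃ j < m, z m = z j ∨ z m = lneg (z j)) ∧
      ∀ i < m, ∀ j < i, (z i).1 = (z j).1 → i = s ∧ j = 0 := by
  classical
  have hex : ∃ s, ∃ x z, Relation.ReflTransGen (Imp adj) (lneg x) x ∧
      IsWalk adj s x (lneg x) z := by
    obtain ⟨k, z, hz⟩ := exists_isWalk h1
    exact ⟨k, x, z, h2, hz⟩
  set s := Nat.find hex with hsdef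
  obtain ⟨y, z, hy, hz⟩ := Nat.find_spec hex
  rw [← hsdef] at hz
  have hmin : ∀ t < s, ∀ x z, Relation.ReflTransGen (Imp adj) (lneg x) x →
      ¬ IsWalk adj t x (lneg x) z := fun t ht x z h h' => Nat.find_min hex ht ⟨x, z, h, h'⟩
  have hs0 : 0 < s := by
    rcases Nat.eq_zero_or_pos s with h | h
    · rw [h] at hz
      exact absurd (hz.2.1.symm.trans hz.1) (lneg_ne y)
    · exact h
  -- On the shortest contradictory walk, the only repeated variable is that of the end points.
  have hdist : ∀ i ≤ s, ∀ j < i, (z i).1 = (z j).1 → i = s ∧ j = 0 := by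
    intro i hi j hj hv
    by_contra hne
    rcases eq_or_eq_lneg hv with h | h
    -- A repeated literal allows a shortcut.
    · have w1 := hz.sub (Nat.zero_le j) (by omega : j ≤ s)
      have w2 := hz.sub hi le_rfl
      rw [h] at w2
      have w3 := w1.append w2
      rw [hz.1, hz.2.1] at w3
      exact hmin _ (by omega) y _ hy w3
    -- A literal followed by its negation is the start of a shorter contradictory walk.
    · have w := hz.sub (hj.le) hi
      rw [h] at w
      refine hmin _ (by omega) (z j) _ ?_ w
      have r1 := hz.reach (Nat.zero_le j) (by omega : j ≤ s)
      have r2 := hz.reach hi le_rfl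
      rw [hz.1] at r1
      rw [hz.2.1, h] at r2
      exact r2.trans (hy.trans r1)
  obtain ⟨l, y', hy'⟩ := exists_isWalk hy
  have hw := hz.append hy'
  set Z : ℕ → Fin n × Bool := fun i => if i ≤ s then z i else y' (i - s) with hZ
  have hZle : ∀ i ≤ s, Z i = z i := fun i hi => by simp [hZ, hi]
  have hl0 : 0 < l := by
    rcases Nat.eq_zero_or_pos l with h | h
    · rw [h] at hy'
      exact absurd (hy'.1.symm.trans hy'.2.1) (lneg_ne y)
    · exact h
  have hex2 : ∃ m, s < m ∧ ∃ j < m, (Z m).1 = (Z j).1 := by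
    refine ⟨s + l, by omega, 0, by omega, ?_⟩
    rw [hw.2.1, hZle 0 (by omega), hz.1]
  set m := Nat.find hex2 with hm
  obtain ⟨hsm, j0, hj0, hv0⟩ := Nat.find_spec hex2
  have hml : m ≤ s + l := by
    refine Nat.find_min' hex2 ⟨by omega, 0, by omega, ?_⟩
    rw [hw.2.1, hZle 0 (by omega), hz.1]
  refine ⟨m, s, Z, hs0, hsm, fun i hi => hw.2.2 i (by omega), ?_, ⟨j0, hj0, eq_or_eq_lneg hv0⟩, ?_⟩
  · rw [hZle s le_rfl, hZle 0 (by omega), hz.1, hz.2.1]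
  · intro i hi j hj hv
    by_cases his : i ≤ s
    · rw [hZle i his, hZle j (by omega)] at hv
      exact hdist i his j hj hv
    · exact absurd ⟨by omega, j, hj, hv⟩ (Nat.find_min hex2 hi)

end TwoSat

/-! ### First moment bound for unsatisfiability -/

section Unsat
variable {n : ℕ}

/-- The clauses (as pairs of distinct literals) of the geometric formula with `k = 2`. -/
def gadj {d : ℕ} (r : ℝ) (ω : Fin n × Bool → (Fin d → ℝ)) (a b : Fin n × Bool) : Prop :=
  a ≠ b ∧ dist (ω a) (ω b) ≤ r

lemma gadj_symm {d : ℕ} {r : ℝ} {ω : Fin n × Bool → (Fin d → ℝ)} {a b : Fin n × Bool}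
    (h : gadj r ω a b) : gadj r ω b a := ⟨h.1.symm, by rw [dist_comm]; exact h.2⟩

lemma geomSat_iff {d : ℕ} {r : ℝ} (hr : 0 ≤ r) (ω : Fin n × Bool → (Fin d → ℝ)) :
    GeomSatisfiable d 2 n r ω ↔
      ∃ α : Fin n → Bool, ∀ a b, gadj r ω a b → α a.1 = a.2 ∨ α b.1 = b.2 := by
  refine exists_congr fun α => ⟨fun h a b hab => ?_, fun h S hS hd => ?_⟩
  · obtain ⟨l, hl, hα⟩ := h {a, b} (Finset.card_pair hab.1) (by
      simp [hab.2, dist_comm (ω b) (ω a), hr])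
    simp only [Finset.mem_insert, Finset.mem_singleton] at hl
    rcases hl with rfl | rfl
    · exact Or.inl hα
    · exact Or.inr hα
  · obtain ⟨a, b, hab, rfl⟩ := Finset.card_eq_two.1 hS
    rcases h a b ⟨hab, hd a (by simp) b (by simp)⟩ with h | h
    · exact ⟨a, by simp, h⟩
    · exact ⟨b, by simp, h⟩

/-- The shape of the walk provided by `exists_bad_walk`. -/
def BadShape (m s : ℕ) (z : ℕ → Fin n × Bool) : Prop :=
  0 < s ∧ s < m ∧ (∀ i < m, lneg (z i) ≠ z (i + 1)) ∧
      z s = lneg (z 0) ∧ (∃ j < m, z m = z j ∨ z m = lneg (z j)) ∧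
      ∀ i < m, ∀ j < i, (z i).1 = (z j).1 → i = s ∧ j = 0

/-- The negated 2-SAT criterion, in the form used for the union bound over walks. -/
lemma exists_badShape {d : ℕ} {r : ℝ} (hr : 0 ≤ r) (ω : Fin n × Bool → (Fin d → ℝ))
    (h : ¬ GeomSatisfiable d 2 n r ω) :
    ∃ (m s : ℕ) (z : ℕ → Fin n × Bool), BadShape m s z ∧
      ∀ i < m, dist (ω (lneg (z i))) (ω (z (i + 1))) ≤ r := by
  rw [geomSat_iff hr] at h
  have := mt (two_sat (adj := gadj r ω) (fun a b => gadj_symm)) h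
  push Not at this
  obtain ⟨x, h1, h2⟩ := this
  obtain ⟨m, s, z, hs, hsm, hw, h3, h4, h5⟩ := exists_bad_walk h1 h2
  exact ⟨m, s, z, ⟨hs, hsm, fun i hi => (hw i hi).1, h3, h4, h5⟩, fun i hi => (hw i hi).2⟩

/-- The edges `{¬ z i, z (i + 1)}` of a bad walk, revealed in order, each have a fresh endpoint, so that
the walk with `m` steps has probability at most `p ^ m`. -/
lemma badShape_prob {X : Type*} [PseudoMetricSpace X] [MeasurableSpace X] [OpensMeasurableSpace X]
    [SecondCountableTopology X] (μ : Measure X) [IsProbabilityMeasure μ] (r : ℝ) (p : ℝ≥0∞)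
    (hp : ∀ a, μ (Metric.closedBall a r) ≤ p) {m s : ℕ} {z : ℕ → Fin n × Bool}
    (hz : BadShape m s z) :
    Measure.pi (fun _ : Fin n × Bool => μ)
      {ω | ∀ i < m, dist (ω (lneg (z i))) (ω (z (i + 1))) ≤ r} ≤ p ^ m := by
  obtain ⟨hs, hsm, hne, hzs, -, hd⟩ := hz
  suffices H : ∀ k ≤ m, Measure.pi (fun _ : Fin n × Bool => μ)
      {ω | ∀ i < k, dist (ω (lneg (z i))) (ω (z (i + 1))) ≤ r} ≤ p ^ k from H m le_rfl
  intro k hk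
  induction k with
  | zero => simp
  | succ k ih =>
    have hset : {ω : Fin n × Bool → X | ∀ i < k + 1, dist (ω (lneg (z i))) (ω (z (i + 1))) ≤ r} =
        {ω | ∀ i < k, dist (ω (lneg (z i))) (ω (z (i + 1))) ≤ r} ∩
          {ω | dist (ω (lneg (z k))) (ω (z (k + 1))) ≤ r} := by
      ext ω
      simp only [Set.mem_ofPred_eq, Set.mem_inter_iff]
      exact ⟨fun h => ⟨fun i hi => h i (by omega), h k (by omega)⟩, fun h i hi => by
        rcases Nat.lt_succ_iff_lt_or_eq.1 hi with h' | rfl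
        · exact h.1 i h'
        · exact h.2⟩
    rw [hset, pow_succ]
    refine (pi_step_le μ r p hp _ ?_ _ _ (hne k (by omega)) ?_).trans
      (mul_le_mul_left (ih (by omega)) p)
    · have : {ω : Fin n × Bool → X | ∀ i < k, dist (ω (lneg (z i))) (ω (z (i + 1))) ≤ r} =
        ⋂ i ∈ Finset.range k, {ω | dist (ω (lneg (z i))) (ω (z (i + 1))) ≤ r} := by ext; simp
      rw [this]
      exact Finset.measurableSet_biInter _ fun j _ => measurableSet_near r _ _
    · intro ω t
      simp only [Set.mem_ofPred_eq]
      refine forall₂_congr fun i hi => ?_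
      rw [Function.update_of_ne, Function.update_of_ne]
      · intro h
        by_cases hik : i + 1 = k
        · rw [hik] at h
          exact lneg_ne _ h.symm
        · have := hd k (by omega) (i + 1) (by omega) (by rw [h]; rfl)
          omega
      · intro h
        have h' := lneg_injective h
        have := hd k (by omega) i hi (by rw [h'])
        rw [this.1, this.2, hzs] at h'
        exact lneg_ne _ h'.symm

/-- Number of bad walks with `m` steps: `z s` is determined by `z 0`, and `z m` by some `z j`. -/
lemma badShape_card (m : ℕ) [DecidablePred fun z : Fin (m + 1) → Fin n × Bool =>
      ∃ s, BadShape m s (fun i => z (Fin.ofNat (m + 1) i))] :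
    (Finset.univ.filter fun z : Fin (m + 1) → Fin n × Bool =>
      ∃ s, BadShape m s (fun i => z (Fin.ofNat (m + 1) i))).card ≤ 2 * m ^ 2 * (2 * n) ^ (m - 1) := by
  classical
  let C : ℕ × ℕ × Bool → Finset (Fin (m + 1) → Fin n × Bool) := fun q =>
    Finset.univ.filter fun z => 0 < q.1 ∧ q.1 < m ∧ q.2.1 < m ∧
      z (Fin.ofNat (m + 1) q.1) = lneg (z (Fin.ofNat (m + 1) 0)) ∧
      z (Fin.ofNat (m + 1) m) = if q.2.2 then z (Fin.ofNat (m + 1) q.2.1)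
        else lneg (z (Fin.ofNat (m + 1) q.2.1))
  have hC : ∀ q, (C q).card ≤ (2 * n) ^ (m - 1) := by
    rintro ⟨s, j, σ⟩
    by_cases hcond : 0 < s ∧ s < m ∧ j < m
    swap
    · have : C (s, j, σ) = ∅ := by
        simp only [C, Finset.filter_eq_empty_iff]
        rintro z - h
        exact hcond ⟨h.1, h.2.1, h.2.2.1⟩
      rw [this]; simp
    obtain ⟨hs, hsm, hj⟩ := hcond
    have hsv : ((Fin.ofNat (m + 1) s : Fin (m + 1)) : ℕ) = s := by
      simp only [Fin.val_ofNat]; exact Nat.mod_eq_of_lt (by omega)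
    have hmv : ((Fin.ofNat (m + 1) m : Fin (m + 1)) : ℕ) = m := by
      simp only [Fin.val_ofNat]; exact Nat.mod_eq_of_lt (by omega)
    have hjv : ((Fin.ofNat (m + 1) j : Fin (m + 1)) : ℕ) = j := by
      simp only [Fin.val_ofNat]; exact Nat.mod_eq_of_lt (by omega)
    set S : Finset (Fin (m + 1)) := {Fin.ofNat (m + 1) s, Fin.ofNat (m + 1) m}ᶜ with hS
    have hScard : S.card = m - 1 := by
      rw [hS, Finset.card_compl, Finset.card_pair]
      · simp
      · intro h
        have := congrArg Fin.val h
        rw [hsv, hmv] at this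
        omega
    have : (C (s, j, σ)).card ≤ (Finset.univ : Finset (S → Fin n × Bool)).card := by
      refine Finset.card_le_card_of_injOn (fun z i => z i) (by simp) ?_
      intro z hz z' hz' heq
      simp only [C, Finset.coe_filter, Finset.mem_univ, true_and, Set.mem_ofPred_eq] at hz hz'
      have e1 : ∀ i, i ≠ Fin.ofNat (m + 1) s → i ≠ Fin.ofNat (m + 1) m → z i = z' i := by
        intro i h1 h2
        exact congrFun heq ⟨i, by
          rw [hS, Finset.mem_compl, Finset.mem_insert, Finset.mem_singleton, not_or]
          exact ⟨h1, h2⟩⟩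
      have e0 : z (Fin.ofNat (m + 1) 0) = z' (Fin.ofNat (m + 1) 0) := by
        refine e1 _ (fun h => ?_) (fun h => ?_)
        · have := congrArg Fin.val h
          rw [hsv] at this; simp at this; omega
        · have := congrArg Fin.val h
          rw [hmv] at this; simp at this; omega
      have es : z (Fin.ofNat (m + 1) s) = z' (Fin.ofNat (m + 1) s) := by
        rw [hz.2.2.2.1, hz'.2.2.2.1, e0]
      have e2 : ∀ i, i ≠ Fin.ofNat (m + 1) m → z i = z' i := by
        intro i h2
        by_cases h1 : i = Fin.ofNat (m + 1) s
        · rw [h1, es]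
        · exact e1 i h1 h2
      have ej : z (Fin.ofNat (m + 1) j) = z' (Fin.ofNat (m + 1) j) := by
        refine e2 _ (fun h => ?_)
        have := congrArg Fin.val h
        rw [hmv, hjv] at this; omega
      funext i
      by_cases h1 : i = Fin.ofNat (m + 1) m
      · rw [h1, hz.2.2.2.2, hz'.2.2.2.2, ej]
      · exact e2 i h1
    refine this.trans (le_of_eq ?_)
    simp [hScard, mul_comm]
  calc _ ≤ ((Finset.range m ×ˢ Finset.range m ×ˢ (Finset.univ : Finset Bool)).biUnion C).card := by
        refine Finset.card_le_card fun z hz => ?_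
        simp only [Finset.mem_filter, Finset.mem_univ, true_and] at hz
        obtain ⟨s, hs, hsm, hne, hzs, ⟨j, hj, hzj⟩, hd⟩ := hz
        simp only [Finset.mem_biUnion, Finset.mem_product, Finset.mem_range, Finset.mem_univ,
          and_true]
        rcases hzj with h | h
        · refine ⟨(s, j, true), ⟨hsm, hj⟩, ?_⟩
          simp only [C, Finset.mem_filter, Finset.mem_univ, true_and, if_true]
          exact ⟨hs, hsm, hj, hzs, h⟩
        · refine ⟨(s, j, false), ⟨hsm, hj⟩, ?_⟩
          simp only [C, Finset.mem_filter, Finset.mem_univ, true_and, Bool.false_eq_true, if_false]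
          exact ⟨hs, hsm, hj, hzs, h⟩
    _ ≤ ∑ q ∈ Finset.range m ×ˢ Finset.range m ×ˢ (Finset.univ : Finset Bool), (2 * n) ^ (m - 1) :=
        Finset.card_biUnion_le.trans (Finset.sum_le_sum fun q _ => hC q)
    _ = _ := by
        rw [Finset.sum_const, Finset.card_product, Finset.card_product, Finset.card_range,
          Finset.card_univ, Fintype.card_bool, smul_eq_mul]
        ring

/-- Union bound over all bad walks. The factor `(2 * n) ^ (m - 1) * p ^ m` is of order `c ^ m / n` with
`c = 2 * n * p`, hence the sum is small when `c < 1`. -/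
lemma unsat_le {d : ℕ} (μ : Measure (Fin d → ℝ)) [IsProbabilityMeasure μ] {r : ℝ} (hr : 0 ≤ r)
    (p : ℝ≥0∞) (hp : ∀ a, μ (Metric.closedBall a r) ≤ p) :
    Measure.pi (fun _ : Fin n × Bool => μ) {ω | ¬ GeomSatisfiable d 2 n r ω} ≤
      ∑' m : ℕ, ((2 * m ^ 2 * (2 * n) ^ (m - 1) : ℕ) : ℝ≥0∞) * p ^ m := by
  classical
  let B : (m : ℕ) → Finset (Fin (m + 1) → Fin n × Bool) := fun m => Finset.univ.filter fun z =>
      ∃ s, BadShape m s (fun i => z (Fin.ofNat (m + 1) i))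
  calc _ ≤ Measure.pi (fun _ : Fin n × Bool => μ) (⋃ m : ℕ, ⋃ z ∈ B m,
        {ω | ∀ i < m, dist (ω (lneg (z (Fin.ofNat (m + 1) i))))
          (ω (z (Fin.ofNat (m + 1) (i + 1)))) ≤ r}) := by
        refine measure_mono fun ω hω => ?_
        obtain ⟨m, s, z, hz, hw⟩ := exists_badShape hr ω hω
        have hcast : ∀ i ≤ m, z ((Fin.ofNat (m + 1) i : Fin (m + 1)) : ℕ) = z i := by
          intro i hi
          rw [Fin.val_ofNat, Nat.mod_eq_of_lt (by omega)]
        simp only [Set.mem_iUnion]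
        refine ⟨m, fun i => z i, ?_, ?_⟩
        · simp only [B, Finset.mem_filter, Finset.mem_univ, true_and]
          obtain ⟨hs, hsm, hne, hzs, ⟨j, hj, hzj⟩, hd⟩ := hz
          refine ⟨s, hs, hsm, ?_, ?_, ⟨j, hj, ?_⟩, ?_⟩
          · intro i hi
            beta_reduce
            rw [hcast i (by omega), hcast (i + 1) (by omega)]
            exact hne i hi
          · beta_reduce
            rw [hcast s (by omega), hcast 0 (by omega)]
            exact hzs
          · beta_reduce
            rw [hcast m le_rfl, hcast j (by omega)]
            exact hzj
          · intro i hi j hj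
            beta_reduce
            rw [hcast i (by omega), hcast j (by omega)]
            exact hd i hi j hj
        · intro i hi
          beta_reduce
          rw [hcast i (by omega), hcast (i + 1) (by omega)]
          exact hw i hi
    _ ≤ ∑' m : ℕ, Measure.pi (fun _ : Fin n × Bool => μ) (⋃ z ∈ B m,
        {ω | ∀ i < m, dist (ω (lneg (z (Fin.ofNat (m + 1) i))))
          (ω (z (Fin.ofNat (m + 1) (i + 1)))) ≤ r}) := measure_iUnion_le _
    _ ≤ _ := by
        refine ENNReal.tsum_le_tsum fun m => ?_
        refine (measure_biUnion_finset_le _ _).trans ?_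
        calc _ ≤ ∑ z ∈ B m, p ^ m := by
              refine Finset.sum_le_sum fun z hz => ?_
              simp only [B, Finset.mem_filter, Finset.mem_univ, true_and] at hz
              obtain ⟨s, hz⟩ := hz
              exact badShape_prob μ r p hp hz
          _ = ((B m).card : ℝ≥0∞) * p ^ m := by simp
          _ ≤ _ := by
              gcongr
              exact badShape_card m

end Unsat

/-! ### The cube and the subcritical regime -/

section Cube
variable {d : ℕ}

instance : IsProbabilityMeasure (unitCubeMeasure d) := by
  constructor
  rw [unitCubeMeasure, Measure.restrict_apply_univ, Real.volume_Icc_pi]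
  simp

lemma cube_ball_le {r : ℝ} (hr : 0 ≤ r) (a : Fin d → ℝ) :
    unitCubeMeasure d (Metric.closedBall a r) ≤ ENNReal.ofReal ((2 * r) ^ d) := by
  refine (Measure.restrict_apply_le _ _).trans ?_
  rw [Real.volume_pi_closedBall a hr]
  simp

lemma cube_ball_ge {r : ℝ} (hr : 0 ≤ r) {a : Fin d → ℝ}
    (ha : a ∈ Set.Icc (fun _ : Fin d => r) (fun _ => 1 - r)) :
    ENNReal.ofReal ((2 * r) ^ d) ≤ unitCubeMeasure d (Metric.closedBall a r) := by
  rw [unitCubeMeasure, Measure.restrict_apply Metric.isClosed_closedBall.measurableSet,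
    Set.inter_eq_left.2, Real.volume_pi_closedBall a hr]
  · simp
  · intro x hx
    rw [Metric.mem_closedBall, dist_pi_le_iff hr] at hx
    constructor <;> intro i <;> have h := hx i <;> have h1 := ha.1 i <;> have h2 := ha.2 i <;>
      rw [Real.dist_eq, abs_le] at h <;> simp at h1 h2 ⊢ <;> linarith

lemma cube_inner {r : ℝ} (hr : 0 ≤ r) (hr' : 2 * r ≤ 1) :
    unitCubeMeasure d (Set.Icc (fun _ : Fin d => r) (fun _ => 1 - r)) =
      ENNReal.ofReal ((1 - 2 * r) ^ d) := by
  rw [unitCubeMeasure, Measure.restrict_apply measurableSet_Icc, Set.inter_eq_left.2,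
    Real.volume_Icc_pi]
  · simp only [Finset.prod_const, Finset.card_univ, Fintype.card_fin]
    rw [← ENNReal.ofReal_pow (by linarith)]
    congr 2; ring
  · refine Set.Icc_subset_Icc ?_ ?_ <;> intro i <;> simp [hr]

end Cube

lemma radius_pow {d : ℕ} (hd : 1 ≤ d) (γ : ℝ) {n : ℕ} (hn : 1 ≤ n) :
    (2 * (γ * (n:ℝ) ^ (-(1:ℝ)/(d:ℝ)))) ^ d = (2 * γ) ^ d / n := by
  have hd' : (d:ℝ) ≠ 0 := by positivity
  have hn' : (0:ℝ) < n := by exact_mod_cast hn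
  rw [← mul_assoc, mul_pow, ← Real.rpow_natCast ((n:ℝ) ^ _), ← Real.rpow_mul hn'.le,
    div_mul_cancel₀ _ hd', Real.rpow_neg_one, div_eq_mul_inv]

/-- The critical radius is where `2 (2γ)^d`, the mean number of clauses at a literal, equals `1`. -/
lemma crit_pow {d : ℕ} (hd : 1 ≤ d) : (2 * (2:ℝ) ^ (-(1 + 1/(d:ℝ)))) ^ d = 1 / 2 := by
  have hd' : (d:ℝ) ≠ 0 := by positivity
  have : 2 * (2:ℝ) ^ (-(1 + 1/(d:ℝ))) = 2 ^ (-(1/(d:ℝ))) := by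
    rw [neg_add, Real.rpow_add (by norm_num), Real.rpow_neg_one]; ring
  rw [this, ← Real.rpow_natCast, ← Real.rpow_mul (by norm_num), neg_mul, one_div,
    inv_mul_cancel₀ hd', Real.rpow_neg_one, one_div]

/-- Below the threshold `c = 2 (2γ)^d < 1`, and the probability of being unsatisfiable is `O(1 / n)`. -/
lemma subcritical {d : ℕ} (hd : 1 ≤ d) {ε γ : ℝ} (hε : 0 < ε) (hγ : 0 < γ)
    (h : γ ≤ (2:ℝ) ^ (-(1 + 1/(d:ℝ))) - ε) :
    Tendsto (fun n : ℕ => placementMeasure d n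
            {ω | GeomSatisfiable d 2 n (γ * (n:ℝ) ^ (-(1:ℝ)/(d:ℝ))) ω})
        atTop (nhds 1) := by
  set c : ℝ := 2 * (2 * γ) ^ d with hc
  have hc0 : 0 < c := by positivity
  have hc1 : c < 1 := by
    have : (2 * γ) ^ d < 1 / 2 := by
      rw [← crit_pow hd]
      exact pow_lt_pow_left₀ (by linarith) (by positivity) (by omega)
    linarith
  have hsum : Summable (fun m : ℕ => (m:ℝ) ^ 2 * c ^ m) :=
    summable_pow_mul_geometric_of_norm_lt_one 2 (by rw [Real.norm_of_nonneg hc0.le]; exact hc1)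
  set K : ℝ≥0∞ := ∑' m : ℕ, ENNReal.ofReal ((m:ℝ) ^ 2 * c ^ m) with hK
  have hKtop : K ≠ ∞ := hsum.tsum_ofReal_ne_top
  have hbound : ∀ n : ℕ, 1 ≤ n → placementMeasure d n
      {ω | ¬ GeomSatisfiable d 2 n (γ * (n:ℝ) ^ (-(1:ℝ)/(d:ℝ))) ω} ≤ (n:ℝ≥0∞)⁻¹ * K := by
    intro n hn
    have hn' : (0:ℝ) < n := by exact_mod_cast hn
    have hr : 0 ≤ γ * (n:ℝ) ^ (-(1:ℝ)/(d:ℝ)) := by positivity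
    refine (unsat_le (unitCubeMeasure d) hr _ (cube_ball_le hr)).trans ?_
    rw [hK, ← ENNReal.tsum_mul_left]
    refine ENNReal.tsum_le_tsum fun m => ?_
    rw [radius_pow hd γ hn, ← ENNReal.ofReal_pow (by positivity),
      ← ENNReal.ofReal_natCast n, ← ENNReal.ofReal_inv_of_pos hn',
      ← ENNReal.ofReal_natCast (_ : ℕ), ← ENNReal.ofReal_mul (by positivity),
      ← ENNReal.ofReal_mul (by positivity)]
    refine ENNReal.ofReal_le_ofReal (le_of_eq ?_)
    rcases m with _ | m
    · simp
    · simp only [Nat.add_sub_cancel]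
      rw [hc]
      generalize (2 * γ) ^ d = X
      rw [div_pow, mul_pow 2 X]
      push_cast
      rw [mul_pow 2 (n:ℝ), pow_succ (n:ℝ) m]
      field_simp
      ring
  have hlim : Tendsto (fun n : ℕ => 1 - (n:ℝ≥0∞)⁻¹ * K) atTop (nhds 1) := by
    have h1 : Tendsto (fun n : ℕ => (n:ℝ≥0∞)⁻¹ * K) atTop (nhds (0 * K)) :=
      ENNReal.Tendsto.mul_const ENNReal.tendsto_inv_nat_nhds_zero (Or.inr hKtop)
    have := ENNReal.Tendsto.sub (tendsto_const_nhds (x := (1:ℝ≥0∞))) h1 (Or.inl (by simp))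
    simpa using this
  have hP : ∀ n, IsProbabilityMeasure (placementMeasure d n) := fun n => by
    unfold placementMeasure; infer_instance
  refine tendsto_of_tendsto_of_tendsto_of_le_of_le' hlim tendsto_const_nhds ?_ ?_
  · filter_upwards [eventually_ge_atTop 1] with n hn
    rw [tsub_le_iff_right]
    calc (1:ℝ≥0∞) = placementMeasure d n Set.univ := by rw [measure_univ]
      _ ≤ placementMeasure d n ({ω | GeomSatisfiable d 2 n (γ * (n:ℝ) ^ (-(1:ℝ)/(d:ℝ))) ω} ∪
          {ω | ¬ GeomSatisfiable d 2 n (γ * (n:ℝ) ^ (-(1:ℝ)/(d:ℝ))) ω}) := by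
          refine measure_mono fun ω _ => ?_
          exact em _
      _ ≤ _ := (measure_union_le _ _).trans (by gcongr; exact hbound n hn)
  · exact Eventually.of_forall fun n => prob_le_one

/-! ### Induced events of matchings -/

section Matching
variable {X : Type*} [PseudoMetricSpace X] [MeasurableSpace X] [OpensMeasurableSpace X]
  [SecondCountableTopology X]
variable {I : Type*} [Fintype I] [DecidableEq I] (μ : Measure X) [IsProbabilityMeasure μ]
variable {J : Type*} [Fintype J] [DecidableEq J]

/-- The event that every pair `(T j, H j)` is at distance at most `r`. -/
def pathEv (X : Type*) [PseudoMetricSpace X] (r : ℝ) (T H : J → I) : Set (I → X) :=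
  {ω | ∀ j, dist (ω (T j)) (ω (H j)) ≤ r}

/-- `{a, b}` is one of the pairs `{T j, H j}`. -/
def IsEdge (T H : J → I) (a b : I) : Prop := ∃ j, (a = T j ∧ b = H j) ∨ (a = H j ∧ b = T j)

/-- The points occurring in the pairs `(T j, H j)`. -/
def pts (T H : J → I) : Finset I := Finset.univ.image T ∪ Finset.univ.image H

/-- The event that among the points `pts T H` the pairs at distance at most `r` are exactly the
pairs `{T j, H j}`. -/
def indEv (X : Type*) [PseudoMetricSpace X] (r : ℝ) (T H : J → I) : Set (I → X) :=
  pathEv X r T H ∩ {ω | ∀ a ∈ pts T H, ∀ b ∈ pts T H, a ≠ b → ¬ IsEdge T H a b →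
    ¬ dist (ω a) (ω b) ≤ r}

lemma T_mem_pts (T H : J → I) (j : J) : T j ∈ pts T H := by simp [pts]
lemma H_mem_pts (T H : J → I) (j : J) : H j ∈ pts T H := by simp [pts]

lemma measurableSet_pathEv (r : ℝ) (T H : J → I) : MeasurableSet (pathEv X r T H) := by
  have : pathEv X r T H = ⋂ j, {ω | dist (ω (T j)) (ω (H j)) ≤ r} := by ext; simp [pathEv]
  rw [this]
  exact MeasurableSet.iInter fun j => measurableSet_near r _ _

lemma measurableSet_indEv (r : ℝ) (T H : J → I) : MeasurableSet (indEv X r T H) := by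
  refine (measurableSet_pathEv r T H).inter ?_
  have : {ω : I → X | ∀ a ∈ pts T H, ∀ b ∈ pts T H, a ≠ b → ¬ IsEdge T H a b →
      ¬ dist (ω a) (ω b) ≤ r} = ⋂ a ∈ pts T H, ⋂ b ∈ pts T H, ⋂ (_ : a ≠ b),
        ⋂ (_ : ¬ IsEdge T H a b), {ω | dist (ω a) (ω b) ≤ r}ᶜ := by
    ext; simp
  rw [this]
  exact Finset.measurableSet_biInter _ fun a _ => Finset.measurableSet_biInter _ fun b _ =>
    MeasurableSet.iInter fun _ => MeasurableSet.iInter fun _ => (measurableSet_near r _ _).compl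

/-- In a matching, whichever endpoint of each pair is chosen as `x j`, it occurs in no other
pair. -/
lemma orient_props {I : Type*} {J : Type*} {T H : J → I} (hTH : Function.Injective (Sum.elim T H))
    (σ : J → Prop) [DecidablePred σ] :
    Function.Injective (fun j => if σ j then H j else T j) ∧
      ∀ j k, (if σ j then H j else T j) ≠ (if σ k then T k else H k) := by
  have hT : ∀ {j k}, T j = T k → j = k := fun {j k} h => Sum.inl_injective (hTH (a₁ := .inl j) (a₂ := .inl k) h)
  have hH : ∀ {j k}, H j = H k → j = k := fun {j k} h => Sum.inr_injective (hTH (a₁ := .inr j) (a₂ := .inr k) h)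
  have hne : ∀ j k, T j ≠ H k := fun j k h => by
    have := hTH (a₁ := .inl j) (a₂ := .inr k) h
    simp at this
  refine ⟨fun j k h => ?_, fun j k h => ?_⟩
  · dsimp only at h
    split_ifs at h with h1 h2 h2
    · exact hH h
    · exact (hne _ _ h.symm).elim
    · exact (hne _ _ h).elim
    · exact hT h
  · split_ifs at h with h1 h2 h2
    · exact hne _ _ h.symm
    · have := hH h; subst this; exact h2 h1
    · have := hT h; subst this; exact h1 h2
    · exact hne _ _ h

lemma near_le (r : ℝ) (p : ℝ≥0∞) (hp : ∀ a, μ (Metric.closedBall a r) ≤ p) {a b : I}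
    (hab : a ≠ b) : Measure.pi (fun _ : I => μ) {ω | dist (ω a) (ω b) ≤ r} ≤ p := by
  have := pi_step_le μ r p hp Set.univ MeasurableSet.univ a b hab (by simp)
  simpa using this

/-- One additional pair costs one additional factor `p`. -/
lemma path_extra_le (r : ℝ) (p : ℝ≥0∞) (hp : ∀ a, μ (Metric.closedBall a r) ≤ p) {T H : J → I}
    (hTH : Function.Injective (Sum.elim T H)) {a b : I} (hab : a ≠ b) (he : ¬ IsEdge T H a b) :
    Measure.pi (fun _ : I => μ) (pathEv X r T H ∩ {ω | dist (ω a) (ω b) ≤ r}) ≤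
      p ^ (Fintype.card J + 1) := by
  classical
  obtain ⟨h1, h2⟩ := orient_props hTH (fun j => T j = a ∨ T j = b)
  have := pi_star_le μ r p hp {ω | dist (ω a) (ω b) ≤ r} (measurableSet_near r a b)
    (fun j => if T j = a ∨ T j = b then H j else T j)
    (fun j => if T j = a ∨ T j = b then T j else H j) Finset.univ h1.injOn
    (fun j _ k _ => h2 j k) ?_
  · rw [pow_succ, mul_comm]
    refine le_trans ?_ (this.trans (mul_le_mul_left (near_le μ r p hp hab) _))
    refine measure_mono fun ω hω => ⟨hω.2, fun j _ => ?_⟩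
    have := hω.1 j
    split_ifs
    · rwa [dist_comm]
    · exact this
  · intro j _ ω t
    have hx : (if T j = a ∨ T j = b then H j else T j) ≠ a ∧
        (if T j = a ∨ T j = b then H j else T j) ≠ b := by
      have hne : T j ≠ H j := fun h => by
        have := hTH (a₁ := .inl j) (a₂ := .inr j) h
        simp at this
      split_ifs with h
      · rcases h with h | h
        · exact ⟨fun h' => hne (h.trans h'.symm), fun h' => he ⟨j, Or.inl ⟨h.symm, h'.symm⟩⟩⟩
        · exact ⟨fun h' => he ⟨j, Or.inr ⟨h'.symm, h.symm⟩⟩, fun h' => hne (h.trans h'.symm)⟩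
      · push Not at h
        exact h
    simp only [Set.mem_ofPred_eq]
    rw [Function.update_of_ne hx.1.symm, Function.update_of_ne hx.2.symm]

/-- Lower bound for a matching: `Q` is a region whose points have full balls of measure `p`. -/
lemma path_ge (r : ℝ) (p q : ℝ≥0∞) (Q : Set X) (hQm : MeasurableSet Q) (hQ : μ Q = q)
    (hp : ∀ a ∈ Q, p ≤ μ (Metric.closedBall a r)) {T H : J → I}
    (hTH : Function.Injective (Sum.elim T H)) :
    (q * p) ^ Fintype.card J ≤ Measure.pi (fun _ : I => μ) (pathEv X r T H) := by
  classical
  have hT : Function.Injective T := fun j k h =>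
    Sum.inl_injective (hTH (a₁ := .inl j) (a₂ := .inl k) h)
  set E : Set (I → X) := Set.univ.pi fun i => if i ∈ Finset.univ.image T then Q else Set.univ with hE
  have hmem : ∀ ω, ω ∈ E ↔ ∀ j, ω (T j) ∈ Q := by
    intro ω
    simp only [hE, Set.mem_univ_pi]
    constructor
    · intro h j
      have := h (T j)
      simpa using this
    · intro h i
      split_ifs with hi
      · obtain ⟨j, -, rfl⟩ := Finset.mem_image.1 hi
        exact h j
      · trivial
  have hEm : MeasurableSet E := MeasurableSet.univ_pi fun i => by
    split_ifs
    · exact hQm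
    · exact MeasurableSet.univ
  have hEμ : Measure.pi (fun _ : I => μ) E = q ^ Fintype.card J := by
    rw [hE, Measure.pi_pi]
    have : ∀ i, μ (if i ∈ Finset.univ.image T then Q else Set.univ) =
        if i ∈ Finset.univ.image T then q else 1 := by
      intro i; split_ifs
      · exact hQ
      · exact measure_univ
    simp_rw [this]
    rw [Finset.prod_ite, Finset.prod_const_one, mul_one, Finset.prod_const,
      Finset.filter_mem_eq_inter, Finset.univ_inter, Finset.card_image_of_injective _ hT,
      Finset.card_univ]
  have hne : ∀ j k, H j ≠ T k := fun j k h => by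
    have := hTH (a₁ := .inr j) (a₂ := .inl k) h
    simp at this
  have := pi_star_ge μ r p E hEm H T Finset.univ (fun ω hω j _ => hp _ ((hmem ω).1 hω j))
    (fun j _ k _ h => Sum.inr_injective (hTH (a₁ := .inr j) (a₂ := .inr k) h))
    (fun j _ k _ => hne j k) (fun j _ ω t => by
      rw [hmem, hmem]
      refine forall_congr' fun k => ?_
      rw [Function.update_of_ne (hne j k).symm])
  rw [hEμ, Finset.card_univ, ← mul_pow] at this
  refine this.trans (measure_mono fun ω hω j => ?_)
  rw [dist_comm]
  exact hω.2 j (Finset.mem_univ j)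

lemma path_le (r : ℝ) (p : ℝ≥0∞) (hp : ∀ a, μ (Metric.closedBall a r) ≤ p) {T H : J → I}
    (hTH : Function.Injective (Sum.elim T H)) :
    Measure.pi (fun _ : I => μ) (pathEv X r T H) ≤ p ^ Fintype.card J := by
  have hne : ∀ j k, T j ≠ H k := fun j k h => by
    have := hTH (a₁ := .inl j) (a₂ := .inr k) h
    simp at this
  have := pi_star_le μ r p hp Set.univ MeasurableSet.univ T H Finset.univ
    (fun j _ k _ h => Sum.inl_injective (hTH (a₁ := .inl j) (a₂ := .inl k) h))
    (fun j _ k _ => hne j k) (by simp)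
  rw [measure_univ, one_mul, Finset.card_univ] at this
  refine le_trans (measure_mono ?_) this
  exact fun ω hω => ⟨trivial, fun j _ => hω j⟩

lemma card_pts_le (T H : J → I) : (pts T H).card ≤ 2 * Fintype.card J := by
  refine (Finset.card_union_le _ _).trans ?_
  have h1 := Finset.card_image_le (s := (Finset.univ : Finset J)) (f := T)
  have h2 := Finset.card_image_le (s := (Finset.univ : Finset J)) (f := H)
  rw [Finset.card_univ] at h1 h2
  omega

/-- Requiring that a matching be induced loses only the configurations with an additional pair. -/
lemma path_le_ind (r : ℝ) (p : ℝ≥0∞) (hp : ∀ a, μ (Metric.closedBall a r) ≤ p) {T H : J → I}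
    (hTH : Function.Injective (Sum.elim T H)) :
    Measure.pi (fun _ : I => μ) (pathEv X r T H) ≤ Measure.pi (fun _ : I => μ) (indEv X r T H) +
      ((2 * Fintype.card J) ^ 2 : ℕ) * p ^ (Fintype.card J + 1) := by
  classical
  set S := (pts T H ×ˢ pts T H).filter fun q => q.1 ≠ q.2 ∧ ¬ IsEdge T H q.1 q.2 with hS
  calc _ ≤ Measure.pi (fun _ : I => μ) (indEv X r T H ∪
        ⋃ q ∈ S, (pathEv X r T H ∩ {ω | dist (ω q.1) (ω q.2) ≤ r})) := by
        refine measure_mono fun ω hω => ?_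
        by_cases h : ω ∈ indEv X r T H
        · exact Or.inl h
        · right
          simp only [indEv, Set.mem_inter_iff, hω, true_and, Set.mem_ofPred_eq] at h
          push Not at h
          obtain ⟨a, ha, b, hb, hab, he, hd⟩ := h
          simp only [Set.mem_iUnion]
          refine ⟨(a, b), ?_, hω, hd⟩
          simp [hS, ha, hb, hab, he]
    _ ≤ _ := by
        refine (measure_union_le _ _).trans ?_
        gcongr
        refine (measure_biUnion_finset_le _ _).trans ?_
        calc _ ≤ ∑ q ∈ S, p ^ (Fintype.card J + 1) := by
              refine Finset.sum_le_sum fun q hq => ?_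
              rw [hS, Finset.mem_filter] at hq
              exact path_extra_le μ r p hp hTH hq.2.1 hq.2.2
          _ = (S.card : ℝ≥0∞) * p ^ (Fintype.card J + 1) := by simp
          _ ≤ _ := by
              gcongr
              refine (Finset.card_filter_le _ _).trans ?_
              rw [Finset.card_product, sq]
              exact Nat.mul_le_mul (card_pts_le T H) (card_pts_le T H)

open Classical in
/-- The conditional cost of the pair `{a, b}` given the induced event of a matching with points `D`
and pairs `E`: it is forced to be present or absent if `a` and `b` both belong to `D`, and costs `p`
otherwise. -/
noncomputable def st (D : Finset I) (E : I → I → Prop) (p : ℝ) (a b : I) : ℝ :=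
  if a ∈ D ∧ b ∈ D then (if E a b then 1 else 0) else p

lemma st_nonneg (D : Finset I) (E : I → I → Prop) {p : ℝ} (hp : 0 ≤ p) (a b : I) :
    0 ≤ st D E p a b := by
  unfold st; split_ifs <;> simp [hp]

/-- Conditioned on the induced event of one matching, a second matching costs at most the
product of the conditional costs of its pairs. -/
lemma ind_path_le (r : ℝ) {p : ℝ} (hp0 : 0 ≤ p)
    (hp : ∀ a, μ (Metric.closedBall a r) ≤ ENNReal.ofReal p) {T H T' H' : J → I}
    (hTH' : Function.Injective (Sum.elim T' H')) :
    Measure.pi (fun _ : I => μ) (indEv X r T H ∩ pathEv X r T' H') ≤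
      Measure.pi (fun _ : I => μ) (indEv X r T H) *
        ENNReal.ofReal (∏ j, st (pts T H) (IsEdge T H) p (T' j) (H' j)) := by
  classical
  by_cases hbad : ∃ j, T' j ∈ pts T H ∧ H' j ∈ pts T H ∧ ¬ IsEdge T H (T' j) (H' j)
  · obtain ⟨j, h1, h2, h3⟩ := hbad
    have hne : T' j ≠ H' j := fun h => by
      have := hTH' (a₁ := .inl j) (a₂ := .inr j) h
      simp at this
    have : indEv X r T H ∩ pathEv X r T' H' = ∅ := by
      rw [Set.eq_empty_iff_forall_notMem]
      exact fun ω hω => hω.1.2 _ h1 _ h2 hne h3 (hω.2 j)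
    rw [this]; simp
  push Not at hbad
  set s : Finset J := Finset.univ.filter fun j => ¬ (T' j ∈ pts T H ∧ H' j ∈ pts T H) with hs
  have hprod : ∏ j, st (pts T H) (IsEdge T H) p (T' j) (H' j) = p ^ s.card := by
    have : ∀ j, st (pts T H) (IsEdge T H) p (T' j) (H' j) =
        if ¬ (T' j ∈ pts T H ∧ H' j ∈ pts T H) then p else 1 := by
      intro j
      unfold st
      by_cases h : T' j ∈ pts T H ∧ H' j ∈ pts T H
      · rw [if_pos h, if_pos (hbad j h.1 h.2), if_neg (not_not.2 h)]
      · rw [if_neg h, if_pos h]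
    simp_rw [this]
    rw [Finset.prod_ite, Finset.prod_const_one, mul_one, Finset.prod_const]
  obtain ⟨h1, h2⟩ := orient_props hTH' (fun j => T' j ∈ pts T H)
  have := pi_star_le μ r _ hp (indEv X r T H) (measurableSet_indEv r T H)
    (fun j => if T' j ∈ pts T H then H' j else T' j)
    (fun j => if T' j ∈ pts T H then T' j else H' j) s h1.injOn
    (fun j _ k _ => h2 j k) ?_
  · rw [hprod, ENNReal.ofReal_pow hp0]
    refine le_trans (measure_mono ?_) this
    refine fun ω hω => ⟨hω.1, fun j _ => ?_⟩
    have := hω.2 j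
    split_ifs
    · rwa [dist_comm]
    · exact this
  · intro j hj ω t
    have hx : (if T' j ∈ pts T H then H' j else T' j) ∉ pts T H := by
      rw [hs, Finset.mem_filter] at hj
      split_ifs with h
      · exact fun h' => hj.2 ⟨h, h'⟩
      · exact h
    have hu : ∀ a ∈ pts T H, Function.update ω (if T' j ∈ pts T H then H' j else T' j) t a = ω a :=
      fun a ha => Function.update_of_ne (fun h => hx (by rw [← h]; exact ha)) _ _
    simp only [indEv, pathEv, Set.mem_inter_iff, Set.mem_ofPred_eq]
    refine and_congr (forall_congr' fun k => ?_) (forall₂_congr fun a ha => forall₂_congr fun b hb => ?_)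
    · rw [hu _ (T_mem_pts T H k), hu _ (H_mem_pts T H k)]
    · rw [hu a ha, hu b hb]

end Matching

/-! ### Weights of paths given a conditioned path -/

section Transfer
variable {n : ℕ} {I : Type*} [DecidableEq I] (loc : Fin n × Bool → I)

/-- First points of the edges of the path from `a` through the literals `z`: the path enters the
literal `z i` and leaves its negation. -/
def tails {m : ℕ} (a : I) (z : Fin m → Fin n × Bool) : Fin (m + 1) → I :=
  Fin.cons a (fun i => loc (lneg (z i)))

/-- Second points of the edges of the path through the literals `z` to `e`. -/
def heads {m : ℕ} (z : Fin m → Fin n × Bool) (e : I) : Fin (m + 1) → I :=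
  Fin.snoc (α := fun _ => I) (fun i => loc (z i)) e

lemma tails_heads_injective {loc : Fin n × Bool → I} (hloc : Function.Injective loc) {m : ℕ}
    {a e : I} (hae : a ≠ e) (ha : ∀ b, loc b ≠ a) (he : ∀ b, loc b ≠ e)
    {z : Fin m → Fin n × Bool} (hz : Function.Injective fun i => (z i).1) :
    Function.Injective (Sum.elim (tails loc a z) (heads loc z e)) := by
  refine Function.Injective.sumElim ?_ ?_ ?_
  · refine Fin.cons_injective_iff.2 ⟨?_, fun i j h => hz ?_⟩
    · rintro ⟨i, hi⟩; exact ha _ hi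
    · have h' : lneg (z i) = lneg (z j) := hloc h
      have h'' := congrArg Prod.fst h'
      exact h''
  · refine Fin.snoc_injective_iff.2 ⟨fun i j h => hz ?_, ?_⟩
    · exact congrArg Prod.fst (hloc h)
    · rintro ⟨i, hi⟩; exact he _ hi
  · intro i j
    induction i using Fin.cases with
    | zero =>
      induction j using Fin.lastCases with
      | last => simpa [tails, heads] using hae
      | cast j => simpa [tails, heads] using (ha _).symm
    | succ i =>
      induction j using Fin.lastCases with
      | last => simpa [tails, heads] using he _
      | cast j =>
        simp only [tails, heads, Fin.cons_succ, Fin.snoc_castSucc]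
        intro h
        have h := hloc h
        have h' := congrArg Prod.fst h
        have hij : i = j := hz h'
        subst hij
        exact lneg_ne _ h

/-- Total weight of the sequences of `j` literals leading from `a` to `e`, where the edge from `x`
to `y` has weight `w x y`. -/
noncomputable def tot (w : I → I → ℝ) (e : I) : ℕ → I → ℝ
  | 0, a => w a e
  | j + 1, a => ∑ b, w a (loc b) * tot w e j (loc (lneg b))

lemma sum_prod_eq_tot (w : I → I → ℝ) (e : I) (m : ℕ) (a : I) :
    ∑ z : Fin m → Fin n × Bool, ∏ i, w (tails loc a z i) (heads loc z e i) = tot loc w e m a := by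
  induction m generalizing a with
  | zero => simp [tot, tails, heads, Fin.snoc]
  | succ m ih =>
    rw [tot, ← (Fin.consEquiv (fun _ : Fin (m + 1) => Fin n × Bool)).sum_comp,
      Fintype.sum_prod_type]
    refine Finset.sum_congr rfl fun b _ => ?_
    rw [← ih, Finset.mul_sum]
    refine Finset.sum_congr rfl fun z _ => ?_
    have h1 : tails loc a (Fin.cons b z : Fin (m + 1) → Fin n × Bool) =
        Fin.cons a (tails loc (loc (lneg b)) z) := by
      funext i
      induction i using Fin.cases with
      | zero => rfl
      | succ i =>
        induction i using Fin.cases with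
        | zero => rfl
        | succ i => rfl
    have h2 : heads loc (Fin.cons b z : Fin (m + 1) → Fin n × Bool) e =
        Fin.cons (loc b) (heads loc z e) := by
      unfold heads
      rw [Fin.cons_snoc_eq_snoc_cons]
      congr 1
      funext i
      induction i using Fin.cases with
      | zero => rfl
      | succ i => rfl
    change ∏ i, w (tails loc a (Fin.cons b z) i) (heads loc (Fin.cons b z) e i) = _
    rw [h1, h2, Fin.prod_univ_succ]
    simp

/-- Let `y j` and `x j` be the largest total weights of sequences of length `j` starting off and on
the conditioned path `D`. Off `D` each of the at most `2 * n` next literals costs `p`, so that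
`y (j + 1) ≤ c * y j + M * p * x j`; on `D` one next literal costs nothing and the others cost `p`,
so that `x (j + 1) ≤ x j + c * y j`. Both grow like `p * c ^ j`, apart from the contribution `κ`
of the one sequence that follows `D` to its end. -/
lemma tot_bound {D : Finset I} {E : I → I → Prop} {p c c0 κ B β : ℝ} {M : ℕ} (m : ℕ) (e : I)
    (hloc : Function.Injective loc)
    (hp : 0 ≤ p) (hc : c = 2 * n * p) (hc0 : 1 < c0) (hcc : c0 ≤ c) (hκ : 0 ≤ κ) (hB : 1 ≤ B)
    (hβ0 : 0 ≤ β)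
    (hBβ : 1 + m * β ≤ B * (1 - 1 / c0)) (hβ : M * κ + M * p * B ≤ β)
    (hneg : ∀ b, loc b ∈ D → loc (lneg b) ∈ D)
    (hcard : (Finset.univ.filter fun b => loc b ∈ D).card ≤ M)
    (hE : ∀ a x y, E a x → E a y → x = y)
    (hend : ∀ a ∈ D, st D E p a e ≤ κ + p) :
    ∀ j ≤ m, (∀ a ∉ D, tot loc (st D E p) e j a ≤ p * c ^ j * (1 + j * β)) ∧
      ∀ a ∈ D, tot loc (st D E p) e j a ≤ κ + B * p * c ^ j := by
  classical
  have hc1 : 1 < c := lt_of_lt_of_le hc0 hcc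
  have hneg' : ∀ b, loc b ∉ D → loc (lneg b) ∉ D := fun b hb h => hb (by simpa using hneg _ h)
  have hBc : ∀ j ≤ m, c * (1 + j * β) ≤ B * (c - 1) := by
    intro j hj
    have h1 : 1 - 1 / c0 ≤ 1 - 1 / c := by
      have := one_div_le_one_div_of_le (by linarith) hcc
      linarith
    have h2 : (j:ℝ) ≤ m := by exact_mod_cast hj
    have h3 : 1 + j * β ≤ B * (1 - 1 / c) := by nlinarith
    have h4 : B * (c - 1) = c * (B * (1 - 1 / c)) := by field_simp
    rw [h4]
    exact mul_le_mul_of_nonneg_left h3 (by linarith)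
  intro j
  induction j with
  | zero =>
    refine fun _ => ⟨fun a ha => ?_, fun a ha => ?_⟩
    · simp [tot, st, ha]
    · have := hend a ha
      simp only [tot, pow_zero, mul_one]
      nlinarith
  | succ j ih =>
    intro hj
    obtain ⟨hy, hx⟩ := ih (by omega)
    set yj := p * c ^ j * (1 + j * β) with hyj
    set xj := κ + B * p * c ^ j with hxj
    have hcj : (1:ℝ) ≤ c ^ j := one_le_pow₀ hc1.le
    have hyj0 : 0 ≤ yj := by positivity
    have hxj0 : 0 ≤ xj := by positivity
    have hcardV : ((Finset.univ : Finset (Fin n × Bool)).card : ℝ) = 2 * n := by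
      simp [mul_comm]
    refine ⟨fun a ha => ?_, fun a ha => ?_⟩
    · have h1 : tot loc (st D E p) e (j + 1) a ≤
          ∑ b : Fin n × Bool, ((if loc b ∈ D then p * xj else 0) + p * yj) := by
        rw [tot]
        refine Finset.sum_le_sum fun b _ => ?_
        have : st D E p a (loc b) = p := by simp [st, ha]
        rw [this]
        split_ifs with hb
        · have := mul_le_mul_of_nonneg_left (hx _ (hneg b hb)) hp
          have h0 : 0 ≤ p * yj := by positivity
          linarith
        · have := mul_le_mul_of_nonneg_left (hy _ (hneg' b hb)) hp
          linarith
      refine h1.trans ?_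
      rw [Finset.sum_add_distrib, Finset.sum_ite, Finset.sum_const_zero, add_zero,
        Finset.sum_const, Finset.sum_const, nsmul_eq_mul, nsmul_eq_mul, hcardV]
      have h2 : ((Finset.univ.filter fun b => loc b ∈ D).card : ℝ) * (p * xj) ≤ M * (p * xj) := by
        gcongr
      have h3 : 2 * n * (p * yj) = c * yj := by rw [hc]; ring
      rw [h3]
      have h4 : M * xj ≤ c ^ (j + 1) * β := by
        have h5 : M * xj = M * κ + M * p * B * c ^ j := by rw [hxj]; ring
        have h6 : M * xj ≤ (M * κ + M * p * B) * c ^ j := by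
          rw [h5]
          have : (M:ℝ) * κ ≤ M * κ * c ^ j := le_mul_of_one_le_right (by positivity) hcj
          linarith
        refine h6.trans ?_
        rw [pow_succ, mul_comm (c ^ j * c)]
        calc (M * κ + M * p * B) * c ^ j ≤ β * c ^ j := by gcongr
          _ ≤ β * (c ^ j * c) := by
            refine mul_le_mul_of_nonneg_left ?_ hβ0
            exact le_mul_of_one_le_right (by positivity) hc1.le
      have h7 : M * (p * xj) ≤ p * (c ^ (j + 1) * β) := by
        calc M * (p * xj) = p * (M * xj) := by ring
          _ ≤ _ := by gcongr
      have h8 : p * c ^ (j + 1) * (1 + ((j + 1 : ℕ) : ℝ) * β) = c * yj + p * (c ^ (j + 1) * β) := by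
        rw [hyj]; push_cast; ring
      linarith
    · have h1 : tot loc (st D E p) e (j + 1) a ≤
          ∑ b : Fin n × Bool, ((if E a (loc b) then xj else 0) + p * yj) := by
        rw [tot]
        refine Finset.sum_le_sum fun b _ => ?_
        have h0 : 0 ≤ p * yj := by positivity
        by_cases hb : loc b ∈ D
        · have : st D E p a (loc b) = if E a (loc b) then 1 else 0 := by simp [st, ha, hb]
          rw [this]
          have h9 := hx _ (hneg b hb)
          split_ifs <;> linarith
        · have : st D E p a (loc b) = p := by simp [st, hb]
          rw [this]
          have := mul_le_mul_of_nonneg_left (hy _ (hneg' b hb)) hp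
          split_ifs <;> linarith
      refine h1.trans ?_
      rw [Finset.sum_add_distrib, Finset.sum_ite, Finset.sum_const_zero, add_zero,
        Finset.sum_const, Finset.sum_const, nsmul_eq_mul, nsmul_eq_mul, hcardV]
      have h2 : (Finset.univ.filter fun b => E a (loc b)).card ≤ 1 := by
        refine Finset.card_le_one.2 fun b hb b' hb' => ?_
        rw [Finset.mem_filter] at hb hb'
        exact hloc (hE _ _ _ hb.2 hb'.2)
      have h2' : ((Finset.univ.filter fun b => E a (loc b)).card : ℝ) * xj ≤ 1 * xj := by
        have : ((Finset.univ.filter fun b => E a (loc b)).card : ℝ) ≤ 1 := by exact_mod_cast h2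
        gcongr
      have h3 : 2 * n * (p * yj) = c * yj := by rw [hc]; ring
      rw [h3]
      have h4 : c * yj ≤ p * c ^ j * (B * (c - 1)) := by
        calc c * yj = p * c ^ j * (c * (1 + j * β)) := by rw [hyj]; ring
          _ ≤ _ := by
            refine mul_le_mul_of_nonneg_left (hBc j (by omega)) (by positivity)
      have h5 : xj + p * c ^ j * (B * (c - 1)) = κ + B * p * c ^ (j + 1) := by
        rw [hxj]; ring
      linarith

lemma edge_unique {J : Type*} {T H : J → I} (hTH : Function.Injective (Sum.elim T H)) {a x y : I}
    (hx : IsEdge T H a x) (hy : IsEdge T H a y) : x = y := by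
  have hT : ∀ {j k}, T j = T k → j = k := fun {j k} h =>
    Sum.inl_injective (hTH (a₁ := .inl j) (a₂ := .inl k) h)
  have hH : ∀ {j k}, H j = H k → j = k := fun {j k} h =>
    Sum.inr_injective (hTH (a₁ := .inr j) (a₂ := .inr k) h)
  have hne : ∀ j k, T j ≠ H k := fun j k h => by
    have := hTH (a₁ := .inl j) (a₂ := .inr k) h
    simp at this
  obtain ⟨j, ⟨h1, h2⟩ | ⟨h1, h2⟩⟩ := hx <;> obtain ⟨k, ⟨h3, h4⟩ | ⟨h3, h4⟩⟩ := hy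
  · rw [h2, h4, hT (h1.symm.trans h3)]
  · exact (hne _ _ (h1.symm.trans h3)).elim
  · exact (hne _ _ (h3.symm.trans h1)).elim
  · rw [h2, h4, hH (h1.symm.trans h3)]

lemma loc_mem_pts {loc : Fin n × Bool → I} (hloc : Function.Injective loc) {m : ℕ}
    {a e : I} (ha : ∀ b, loc b ≠ a) (he : ∀ b, loc b ≠ e) (z : Fin m → Fin n × Bool)
    (b : Fin n × Bool) : loc b ∈ pts (tails loc a z) (heads loc z e) ↔
      ∃ i, b = z i ∨ b = lneg (z i) := by
  simp only [pts, Finset.mem_union, Finset.mem_image, Finset.mem_univ, true_and]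
  constructor
  · rintro (⟨i, hi⟩ | ⟨i, hi⟩)
    · induction i using Fin.cases with
      | zero => exact (ha _ hi.symm).elim
      | succ i => exact ⟨i, Or.inr (hloc hi).symm⟩
    · induction i using Fin.lastCases with
      | last => simp only [heads, Fin.snoc_last] at hi; exact (he _ hi.symm).elim
      | cast i =>
        simp only [heads, Fin.snoc_castSucc] at hi
        exact ⟨i, Or.inl (hloc hi).symm⟩
  · rintro ⟨i, rfl | rfl⟩
    · exact Or.inr ⟨i.castSucc, by simp [heads]⟩
    · exact Or.inl ⟨i.succ, by simp [tails]⟩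

lemma card_loc_mem_pts {loc : Fin n × Bool → I} (hloc : Function.Injective loc) {m : ℕ}
    {a e : I} (ha : ∀ b, loc b ≠ a) (he : ∀ b, loc b ≠ e) (z : Fin m → Fin n × Bool) :
    (Finset.univ.filter fun b => loc b ∈ pts (tails loc a z) (heads loc z e)).card ≤ 2 * m := by
  calc _ ≤ (Finset.univ.image z ∪ Finset.univ.image (fun i => lneg (z i))).card := by
        refine Finset.card_le_card fun b hb => ?_
        rw [Finset.mem_filter, loc_mem_pts hloc ha he] at hb
        obtain ⟨-, i, rfl | rfl⟩ := hb <;> simp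
    _ ≤ _ := by
        refine (Finset.card_union_le _ _).trans ?_
        have h1 := Finset.card_image_le (s := (Finset.univ : Finset (Fin m))) (f := z)
        have h2 := Finset.card_image_le (s := (Finset.univ : Finset (Fin m)))
          (f := fun i => lneg (z i))
        rw [Finset.card_univ, Fintype.card_fin] at h1 h2
        omega

lemma pts_iff {loc : Fin n × Bool → I} {m : ℕ}
    {a e x : I} (hx : ∀ b, loc b ≠ x) (z : Fin m → Fin n × Bool) :
    x ∈ pts (tails loc a z) (heads loc z e) ↔ x = a ∨ x = e := by
  simp only [pts, Finset.mem_union, Finset.mem_image, Finset.mem_univ, true_and]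
  constructor
  · rintro (⟨i, hi⟩ | ⟨i, hi⟩)
    · induction i using Fin.cases with
      | zero => exact Or.inl hi.symm
      | succ i => exact (hx _ hi).elim
    · induction i using Fin.lastCases with
      | last => simp only [heads, Fin.snoc_last] at hi; exact Or.inr hi.symm
      | cast i => simp only [heads, Fin.snoc_castSucc] at hi; exact (hx _ hi).elim
  · rintro (rfl | rfl)
    · exact Or.inl ⟨0, rfl⟩
    · exact Or.inr ⟨Fin.last m, by simp [heads]⟩

end Transfer

/-! ### Second moments of the number of induced paths -/

section Moments
variable {X : Type*} [PseudoMetricSpace X] [MeasurableSpace X] [OpensMeasurableSpace X]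
  [SecondCountableTopology X] (μ : Measure X) [IsProbabilityMeasure μ]
variable {n : ℕ}

lemma indEv_comp {I I' J : Type*} [Fintype I] [DecidableEq I] [Fintype I'] [DecidableEq I']
    [Fintype J] [DecidableEq J] {φ : I → I'} (hφ : Function.Injective φ)
    (r : ℝ) (T H : J → I) (ω : I' → X) :
    (ω ∘ φ ∈ indEv X r T H) ↔ ω ∈ indEv X r (φ ∘ T) (φ ∘ H) := by
  have hp : pts (φ ∘ T) (φ ∘ H) = (pts T H).image φ := by
    simp [pts, Finset.image_union, Finset.image_image]
  have he : ∀ a b, IsEdge (φ ∘ T) (φ ∘ H) (φ a) (φ b) ↔ IsEdge T H a b := by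
    intro a b; simp [IsEdge, hφ.eq_iff]
  simp only [indEv, pathEv, Set.mem_inter_iff, Set.mem_ofPred_eq, hp, Finset.forall_mem_image, he,
    Function.comp_apply, hφ.ne_iff]

/-- The literal sequences with pairwise distinct variables. -/
noncomputable def valid (n m : ℕ) : Finset (Fin m → Fin n × Bool) := by
  classical exact Finset.univ.filter fun z => Function.Injective fun i => (z i).1

/-- The placements of the literals and of two end points for which the literals `z` form an induced
path between these end points. -/
def pathSet (X : Type*) [PseudoMetricSpace X] {n : ℕ} (r : ℝ) {m : ℕ} (z : Fin m → Fin n × Bool) :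
    Set ((Fin n × Bool → X) × (Fin 2 → X)) :=
  {q | Sum.elim q.1 q.2 ∈ indEv X r (tails Sum.inl (Sum.inr 0) z) (heads Sum.inl z (Sum.inr 1))}

/-- The number of induced paths with `m` inner literals between two given end points. -/
noncomputable def numPaths (X : Type*) [PseudoMetricSpace X] (n : ℕ) (r : ℝ) (m : ℕ)
    (q : (Fin n × Bool → X) × (Fin 2 → X)) : ℝ≥0∞ :=
  ∑ z ∈ valid n m, (pathSet X r z).indicator 1 q

lemma measurable_sumElim {A B : Type*} :
    Measurable (fun q : (A → X) × (B → X) => (Sum.elim q.1 q.2 : A ⊕ B → X)) := by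
  refine measurable_pi_lambda _ fun i => ?_
  rcases i with i | i
  · exact (measurable_pi_apply i).comp measurable_fst
  · exact (measurable_pi_apply i).comp measurable_snd

lemma measurableSet_pathSet (r : ℝ) {m : ℕ} (z : Fin m → Fin n × Bool) :
    MeasurableSet (pathSet X r z) :=
  measurable_sumElim (measurableSet_indEv r _ _)

lemma measurable_numPaths (r : ℝ) (m : ℕ) : Measurable (numPaths X n r m) :=
  Finset.measurable_sum _ fun z _ => measurable_one.indicator (measurableSet_pathSet r z)

/-- The event that `z` is an induced path between the end points `ι 0` and `ι 1`, where two
disjoint copies of the end points are available. -/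
def copyEv (X : Type*) [PseudoMetricSpace X] {n : ℕ} (r : ℝ) (ι : Fin 2 → Fin 2 ⊕ Fin 2) {m : ℕ}
    (z : Fin m → Fin n × Bool) : Set ((Fin n × Bool) ⊕ (Fin 2 ⊕ Fin 2) → X) :=
  indEv X r (tails Sum.inl (Sum.inr (ι 0)) z) (heads Sum.inl z (Sum.inr (ι 1)))

lemma mem_copyEv (r : ℝ) {ι : Fin 2 → Fin 2 ⊕ Fin 2} (hι : Function.Injective ι) {m : ℕ}
    (z : Fin m → Fin n × Bool) (ω : (Fin n × Bool) ⊕ (Fin 2 ⊕ Fin 2) → X) :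
    (ω ∘ Sum.inl, ω ∘ Sum.inr ∘ ι) ∈ pathSet X r z ↔ ω ∈ copyEv X r ι z := by
  have h0 : Function.Injective (Sum.map id ι : (Fin n × Bool) ⊕ Fin 2 → _) :=
    Function.injective_id.sumMap hι
  have h1 : (Sum.elim (ω ∘ Sum.inl) (ω ∘ Sum.inr ∘ ι)) = ω ∘ (Sum.map id ι) := by
    funext i; rcases i with i | i <;> rfl
  rw [pathSet, Set.mem_ofPred_eq, h1, indEv_comp h0, copyEv]
  have h2 : (Sum.map id ι : (Fin n × Bool) ⊕ Fin 2 → _) ∘ tails Sum.inl (Sum.inr 0) z =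
      tails Sum.inl (Sum.inr (ι 0)) z := by
    funext i
    induction i using Fin.cases <;> rfl
  have h3 : (Sum.map id ι : (Fin n × Bool) ⊕ Fin 2 → _) ∘ heads Sum.inl z (Sum.inr 1) =
      heads Sum.inl z (Sum.inr (ι 1)) := by
    funext i
    induction i using Fin.lastCases <;> simp [heads]
  rw [h2, h3]

lemma indicator_copy (r : ℝ) {ι : Fin 2 → Fin 2 ⊕ Fin 2} (hι : Function.Injective ι) {m : ℕ}
    (z : Fin m → Fin n × Bool) (ω : (Fin n × Bool) ⊕ (Fin 2 ⊕ Fin 2) → X) :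
    (pathSet X r z).indicator (1 : (Fin n × Bool → X) × (Fin 2 → X) → ℝ≥0∞)
      (ω ∘ Sum.inl, ω ∘ Sum.inr ∘ ι) = (copyEv X r ι z).indicator 1 ω := by
  have h := mem_copyEv r hι z ω
  by_cases hω : ω ∈ copyEv X r ι z
  · rw [Set.indicator_of_mem hω, Set.indicator_of_mem (h.2 hω)]; rfl
  · rw [Set.indicator_of_notMem hω, Set.indicator_of_notMem (fun h' => hω (h.1 h'))]

lemma lintegral_split (F : (Fin n × Bool → X) × ((Fin 2 → X) × (Fin 2 → X)) → ℝ≥0∞)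
    (hF : Measurable F) :
    ∫⁻ w, ∫⁻ e, ∫⁻ e', F (w, e, e') ∂Measure.pi (fun _ => μ) ∂Measure.pi (fun _ => μ)
      ∂Measure.pi (fun _ => μ) =
    ∫⁻ ω : (Fin n × Bool) ⊕ (Fin 2 ⊕ Fin 2) → X,
      F (ω ∘ Sum.inl, ω ∘ Sum.inr ∘ Sum.inl, ω ∘ Sum.inr ∘ Sum.inr) ∂Measure.pi (fun _ => μ) := by
  have h1 := measurePreserving_sumPiEquivProdPi
    (X := fun _ : (Fin n × Bool) ⊕ (Fin 2 ⊕ Fin 2) => X) (fun _ => μ)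
  have h2 := measurePreserving_sumPiEquivProdPi (X := fun _ : Fin 2 ⊕ Fin 2 => X) (fun _ => μ)
  have h3 := ((MeasurePreserving.id (Measure.pi fun _ : Fin n × Bool => μ)).prod h2).comp h1
  have := h3.lintegral_comp hF
  rw [lintegral_prod _ hF.aemeasurable] at this
  refine Eq.trans ?_ this.symm
  refine lintegral_congr fun w => ?_
  rw [lintegral_prod]
  exact (hF.comp measurable_prodMk_left).aemeasurable

lemma lintegral_numPaths (r : ℝ) (m : ℕ) :
    ∫⁻ w, ∫⁻ e, numPaths X n r m (w, e) ∂Measure.pi (fun _ => μ) ∂Measure.pi (fun _ => μ) =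
      ∑ z ∈ valid n m, Measure.pi (fun _ => μ) (copyEv X r Sum.inl z) := by
  have := lintegral_split (n := n) μ (fun q => numPaths X n r m (q.1, q.2.1))
    ((measurable_numPaths r m).comp (by fun_prop))
  simp only [lintegral_const, measure_univ, mul_one] at this
  rw [this]
  simp only [numPaths]
  rw [lintegral_finsetSum' _ fun z _ => ?_]
  · refine Finset.sum_congr rfl fun z _ => ?_
    rw [← lintegral_indicator_one (show MeasurableSet (copyEv X r Sum.inl z) from
      measurableSet_indEv r _ _)]
    refine lintegral_congr fun ω => ?_
    exact indicator_copy r Sum.inl_injective z ω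
  · refine ((measurable_one.indicator (measurableSet_pathSet r z)).comp ?_).aemeasurable
    fun_prop

lemma lintegral_mul_numPaths (r : ℝ) (m : ℕ) (ι : Fin 2 → Fin 2 ⊕ Fin 2)
    (hι : Function.Injective ι) :
    ∫⁻ ω : (Fin n × Bool) ⊕ (Fin 2 ⊕ Fin 2) → X,
      numPaths X n r m (ω ∘ Sum.inl, ω ∘ Sum.inr ∘ Sum.inl) *
        numPaths X n r m (ω ∘ Sum.inl, ω ∘ Sum.inr ∘ ι) ∂Measure.pi (fun _ => μ) =
      ∑ z ∈ valid n m, ∑ z' ∈ valid n m,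
        Measure.pi (fun _ => μ) (copyEv X r Sum.inl z ∩ copyEv X r ι z') := by
  simp only [numPaths, Finset.sum_mul_sum]
  have key : ∀ z z' : Fin m → Fin n × Bool, ∀ ω : (Fin n × Bool) ⊕ (Fin 2 ⊕ Fin 2) → X,
      (pathSet X r z).indicator (1 : (Fin n × Bool → X) × (Fin 2 → X) → ℝ≥0∞) (ω ∘ Sum.inl, ω ∘ Sum.inr ∘ Sum.inl) *
        (pathSet X r z').indicator (1 : (Fin n × Bool → X) × (Fin 2 → X) → ℝ≥0∞) (ω ∘ Sum.inl, ω ∘ Sum.inr ∘ ι) =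
      (copyEv X r Sum.inl z ∩ copyEv X r ι z').indicator 1 ω := by
    intro z z' ω
    rw [Set.inter_indicator_one, Pi.mul_apply, indicator_copy r hι z' ω,
      indicator_copy r Sum.inl_injective z ω]
  simp only [key]
  have hm : ∀ z z' : Fin m → Fin n × Bool,
      MeasurableSet (copyEv X r Sum.inl z ∩ copyEv X r ι z') := fun z z' =>
    (measurableSet_indEv r _ _).inter (measurableSet_indEv r _ _)
  rw [lintegral_finsetSum _ fun z _ => Finset.measurable_sum _ fun z' _ =>
    measurable_one.indicator (hm z z')]
  refine Finset.sum_congr rfl fun z _ => ?_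
  rw [lintegral_finsetSum _ fun z' _ => measurable_one.indicator (hm z z')]
  refine Finset.sum_congr rfl fun z' _ => ?_
  rw [lintegral_indicator_one (hm z z')]

lemma lintegral_numPaths_sq (r : ℝ) (m : ℕ) :
    ∫⁻ w, ∫⁻ e, numPaths X n r m (w, e) ^ 2 ∂Measure.pi (fun _ => μ) ∂Measure.pi (fun _ => μ) =
      ∑ z ∈ valid n m, ∑ z' ∈ valid n m,
        Measure.pi (fun _ => μ) (copyEv X r Sum.inl z ∩ copyEv X r Sum.inl z') := by
  have := lintegral_split (n := n) μ (fun q => numPaths X n r m (q.1, q.2.1) ^ 2)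
    (((measurable_numPaths r m).comp (by fun_prop)).pow_const 2)
  simp only [lintegral_const, measure_univ, mul_one] at this
  rw [this, ← lintegral_mul_numPaths μ r m _ Sum.inl_injective]
  simp only [sq]

lemma lintegral_sq_numPaths (r : ℝ) (m : ℕ) :
    ∫⁻ w, (∫⁻ e, numPaths X n r m (w, e) ∂Measure.pi (fun _ => μ)) ^ 2 ∂Measure.pi (fun _ => μ) =
      ∑ z ∈ valid n m, ∑ z' ∈ valid n m,
        Measure.pi (fun _ => μ) (copyEv X r Sum.inl z ∩ copyEv X r Sum.inr z') := by
  have := lintegral_split (n := n) μ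
    (fun q => numPaths X n r m (q.1, q.2.1) * numPaths X n r m (q.1, q.2.2))
    (((measurable_numPaths r m).comp (by fun_prop)).mul
      ((measurable_numPaths r m).comp (by fun_prop)))
  rw [← lintegral_mul_numPaths μ r m _ Sum.inr_injective, ← this]
  refine lintegral_congr fun w => ?_
  have hm : Measurable fun e => numPaths X n r m (w, e) :=
    (measurable_numPaths r m).comp measurable_prodMk_left
  simp only [lintegral_const_mul _ hm, lintegral_mul_const _ hm]
  rw [sq]

/-- Given the induced path `z`, the expected number of paths `z'` is at most the total weight `tot` of
the sequences between the end points of `z'`. -/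
lemma copy_sum_le (r : ℝ) {p : ℝ} (hp0 : 0 ≤ p)
    (hp : ∀ a, μ (Metric.closedBall a r) ≤ ENNReal.ofReal p) {m : ℕ}
    (ι : Fin 2 → Fin 2 ⊕ Fin 2) (hι : Function.Injective ι) (z : Fin m → Fin n × Bool) :
    ∑ z' ∈ valid n m,
        Measure.pi (fun _ => μ) (copyEv X r Sum.inl z ∩ copyEv X r ι z') ≤
      Measure.pi (fun _ => μ) (copyEv X r Sum.inl z) * ENNReal.ofReal
        (tot Sum.inl (st (pts (tails (Sum.inl (β := Fin 2 ⊕ Fin 2)) (Sum.inr (Sum.inl 0)) z)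
            (heads Sum.inl z (Sum.inr (Sum.inl 1))))
          (IsEdge (tails Sum.inl (Sum.inr (Sum.inl 0)) z) (heads Sum.inl z (Sum.inr (Sum.inl 1)))) p)
          (Sum.inr (ι 1)) m (Sum.inr (ι 0))) := by
  rw [← sum_prod_eq_tot, ENNReal.ofReal_sum_of_nonneg
    (fun z' _ => Finset.prod_nonneg fun i _ => st_nonneg _ _ hp0 _ _), Finset.mul_sum]
  refine (Finset.sum_le_sum fun z' hz' => ?_).trans
    (Finset.sum_le_sum_of_subset (Finset.subset_univ (valid n m)))
  simp only [valid, Finset.mem_filter, Finset.mem_univ, true_and] at hz'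
  refine (measure_mono (Set.inter_subset_inter_right _ Set.inter_subset_left)).trans
    (ind_path_le μ r hp0 hp ?_)
  refine tails_heads_injective Sum.inl_injective ?_ (by simp) (by simp) hz'
  intro h
  have := hι (Sum.inr_injective h)
  simp at this

/-- Constants for the second moment method: `c` is the mean number of successors of a literal,
`p * c ^ m` the mean number of paths. -/
structure Params (n m : ℕ) (p c c0 : ℝ) : Prop where
  hp : 0 ≤ p
  hc : c = 2 * n * p
  hc0 : 1 < c0
  hcc : c0 ≤ c
  hsmall : 4 * m ^ 2 * p ≤ 1 - 1 / c0

variable {m : ℕ} {p c c0 : ℝ}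

lemma Params.hpos (h : Params n m p c c0) : 0 < 1 - 1 / c0 ∧ 1 - 1 / c0 ≤ 1 := by
  have := h.hc0
  have h1 : 1 / c0 < 1 := by rw [div_lt_one (by linarith)]; exact this
  have h2 : 0 < 1 / c0 := by positivity
  constructor <;> linarith

/-- Two paths with disjoint pairs of end points are nearly uncorrelated: the second path starts and ends
off the first one, so following the first path costs an additional `p` at both ends. -/
lemma second_moment_one (h : Params n m p c c0) (r : ℝ)
    (hp : ∀ a, μ (Metric.closedBall a r) ≤ ENNReal.ofReal p) :
    ∫⁻ w, (∫⁻ e, numPaths X n r m (w, e) ∂Measure.pi (fun _ => μ)) ^ 2 ∂Measure.pi (fun _ => μ) ≤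
    (∫⁻ w, ∫⁻ e, numPaths X n r m (w, e) ∂Measure.pi (fun _ => μ) ∂Measure.pi (fun _ => μ)) *
      ENNReal.ofReal (p * c ^ m * (1 + 4 * m ^ 2 * p / (1 - 1 / c0))) := by
  rw [lintegral_sq_numPaths, lintegral_numPaths, Finset.sum_mul]
  refine Finset.sum_le_sum fun z hz => ?_
  simp only [valid, Finset.mem_filter, Finset.mem_univ, true_and] at hz
  refine (copy_sum_le μ r h.hp hp Sum.inr Sum.inr_injective z).trans ?_
  gcongr
  obtain ⟨hh0, hh1⟩ := h.hpos
  have hp0 := h.hp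
  have hsm := h.hsmall
  set g := 1 - 1 / c0 with hg
  have hinj : Function.Injective (Sum.elim (tails (Sum.inl (β := Fin 2 ⊕ Fin 2)) (Sum.inr (Sum.inl 0)) z)
            (heads Sum.inl z (Sum.inr (Sum.inl 1)))) :=
    tails_heads_injective Sum.inl_injective (by simp) (by simp) (by simp) hz
  have hcd := card_loc_mem_pts (loc := Sum.inl (β := Fin 2 ⊕ Fin 2)) Sum.inl_injective
    (a := Sum.inr (Sum.inl 0)) (e := Sum.inr (Sum.inl 1)) (by simp) (by simp) z
  have hmem := loc_mem_pts (loc := Sum.inl (β := Fin 2 ⊕ Fin 2)) Sum.inl_injective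
    (a := Sum.inr (Sum.inl 0)) (e := Sum.inr (Sum.inl 1)) (by simp) (by simp) z
  have := (tot_bound (Sum.inl (β := Fin 2 ⊕ Fin 2)) (E := IsEdge (tails (Sum.inl (β := Fin 2 ⊕ Fin 2))
      (Sum.inr (Sum.inl 0)) z) (heads Sum.inl z (Sum.inr (Sum.inl 1)))) (p := p) (κ := 0) (B := 2 / g)
    (β := 4 * m * p / g) (M := 2 * m) m (Sum.inr (Sum.inr 1))
    Sum.inl_injective h.hp h.hc h.hc0 h.hcc le_rfl ?_ (by positivity) ?_ ?_ ?_
    hcd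
    (fun a x y hx hy => edge_unique hinj hx hy) ?_ m le_rfl).1 (Sum.inr (Sum.inr 0)) ?_
  · refine this.trans (le_of_eq ?_)
    ring
  · rw [le_div_iff₀ hh0]; linarith
  · rw [← hg]
    have h2 : (m:ℝ) * (4 * m * p / g) ≤ 1 := by
      rw [← mul_div_assoc, div_le_one hh0]; linarith
    have : 2 / g * g = 2 := by field_simp
    linarith
  · push_cast
    refine le_of_eq ?_
    field_simp; ring
  · intro b hb
    rw [hmem] at hb ⊢
    obtain ⟨i, rfl | rfl⟩ := hb
    · exact ⟨i, Or.inr rfl⟩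
    · exact ⟨i, Or.inl (lneg_lneg _)⟩
  · intro a ha
    have : (Sum.inr (Sum.inr 1) : (Fin n × Bool) ⊕ (Fin 2 ⊕ Fin 2)) ∉
      pts (tails (Sum.inl (β := Fin 2 ⊕ Fin 2)) (Sum.inr (Sum.inl 0)) z)
            (heads Sum.inl z (Sum.inr (Sum.inl 1))) := by
      rw [pts_iff (by simp)]; simp
    simp [st, this]
  · rw [pts_iff (by simp)]; simp

/-- For two paths with the same end points, the second moment is at most the mean times
`1 + O(m ^ 2 * mean)`, the term `1` being the path itself. -/
lemma second_moment_two (h : Params n m p c c0) (r : ℝ)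
    (hp : ∀ a, μ (Metric.closedBall a r) ≤ ENNReal.ofReal p) :
    ∫⁻ w, ∫⁻ e, numPaths X n r m (w, e) ^ 2 ∂Measure.pi (fun _ => μ) ∂Measure.pi (fun _ => μ) ≤
    (∫⁻ w, ∫⁻ e, numPaths X n r m (w, e) ∂Measure.pi (fun _ => μ) ∂Measure.pi (fun _ => μ)) *
      ENNReal.ofReal (1 + 2 * (1 + 2 * m ^ 2) / (1 - 1 / c0) * p * c ^ m) := by
  rw [lintegral_numPaths_sq, lintegral_numPaths, Finset.sum_mul]
  refine Finset.sum_le_sum fun z hz => ?_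
  simp only [valid, Finset.mem_filter, Finset.mem_univ, true_and] at hz
  refine (copy_sum_le μ r h.hp hp Sum.inl Sum.inl_injective z).trans ?_
  gcongr
  obtain ⟨hh0, hh1⟩ := h.hpos
  have hp0 := h.hp
  have hsm := h.hsmall
  set g := 1 - 1 / c0 with hg
  have hinj : Function.Injective (Sum.elim (tails (Sum.inl (β := Fin 2 ⊕ Fin 2)) (Sum.inr (Sum.inl 0)) z)
            (heads Sum.inl z (Sum.inr (Sum.inl 1)))) :=
    tails_heads_injective Sum.inl_injective (by simp) (by simp) (by simp) hz
  have hcd := card_loc_mem_pts (loc := Sum.inl (β := Fin 2 ⊕ Fin 2)) Sum.inl_injective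
    (a := Sum.inr (Sum.inl 0)) (e := Sum.inr (Sum.inl 1)) (by simp) (by simp) z
  have hmem := loc_mem_pts (loc := Sum.inl (β := Fin 2 ⊕ Fin 2)) Sum.inl_injective
    (a := Sum.inr (Sum.inl 0)) (e := Sum.inr (Sum.inl 1)) (by simp) (by simp) z
  set B : ℝ := 2 * (1 + 2 * m ^ 2) / g with hB
  have hB0 : 0 ≤ B := by positivity
  have hBg : B * g = 2 * (1 + 2 * m ^ 2) := by rw [hB]; field_simp
  refine (tot_bound (Sum.inl (β := Fin 2 ⊕ Fin 2)) (E := IsEdge (tails (Sum.inl (β := Fin 2 ⊕ Fin 2))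
      (Sum.inr (Sum.inl 0)) z) (heads Sum.inl z (Sum.inr (Sum.inl 1)))) (p := p) (κ := 1) (B := B)
    (β := 2 * m + 2 * m * p * B) (M := 2 * m) m (Sum.inr (Sum.inl 1))
    Sum.inl_injective h.hp h.hc h.hc0 h.hcc zero_le_one ?_ (by positivity) ?_ ?_ ?_
    hcd
    (fun a x y hx hy => edge_unique hinj hx hy) ?_ m le_rfl).2 (Sum.inr (Sum.inl 0)) ?_
  · rw [hB, le_div_iff₀ hh0]; nlinarith [sq_nonneg (m:ℝ)]
  · rw [← hg, hBg]
    have : 4 * m ^ 2 * p * B ≤ g * B := mul_le_mul_of_nonneg_right hsm hB0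
    rw [mul_comm g, hBg] at this
    nlinarith
  · push_cast
    refine le_of_eq ?_
    ring
  · intro b hb
    rw [hmem] at hb ⊢
    obtain ⟨i, rfl | rfl⟩ := hb
    · exact ⟨i, Or.inr rfl⟩
    · exact ⟨i, Or.inl (lneg_lneg _)⟩
  · intro a ha
    unfold st
    split_ifs <;> linarith
  · rw [pts_iff (by simp)]; simp

end Moments

/-! ### First moment of the number of induced paths -/

section FirstMoment

lemma card_valid (n m : ℕ) : (valid n m).card = n.descFactorial m * 2 ^ m := by
  classical
  have e : {z : Fin m → Fin n × Bool // Function.Injective fun i => (z i).1} ≃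
      (Fin m ↪ Fin n) × (Fin m → Bool) :=
    { toFun := fun z => (⟨fun i => (z.1 i).1, z.2⟩, fun i => (z.1 i).2)
      invFun := fun q => ⟨fun i => (q.1 i, q.2 i), q.1.injective⟩
      left_inv := fun z => rfl
      right_inv := fun q => rfl }
  have h := Fintype.card_congr e
  rw [Fintype.card_prod, Fintype.card_embedding_eq, Fintype.card_fun, Fintype.card_fin,
    Fintype.card_fin, Fintype.card_bool, Fintype.card_subtype] at h
  rw [← h, valid]

lemma card_valid_ge {n m : ℕ} (hn : 1 ≤ n) (hmn : m ≤ n) :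
    (2 * n : ℝ) ^ m * (1 - m ^ 2 / n) ≤ (valid n m).card := by
  have hn' : (0:ℝ) < n := by exact_mod_cast hn
  rw [card_valid]
  push_cast
  have h1 : ((n:ℝ) - m) ^ m ≤ n.descFactorial m := by
    have := Nat.pow_sub_le_descFactorial n m
    have h2 : ((n + 1 - m : ℕ) : ℝ) ^ m ≤ n.descFactorial m := by exact_mod_cast this
    refine le_trans ?_ h2
    have : (m:ℝ) ≤ n := by exact_mod_cast hmn
    refine pow_le_pow_left₀ (by linarith) ?_ m
    rw [Nat.cast_sub (by omega)]; push_cast; linarith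
  have h3 : 1 + (m:ℝ) * (-(m / n)) ≤ (1 + -(m / n : ℝ)) ^ m := by
    refine one_add_mul_le_pow ?_ m
    have : (m:ℝ) / n ≤ 1 := by rw [div_le_one hn']; exact_mod_cast hmn
    linarith
  have h4 : ((n:ℝ) - m) ^ m = n ^ m * (1 + -(m / n : ℝ)) ^ m := by
    rw [← mul_pow]; congr 1; field_simp; ring
  calc (2 * n : ℝ) ^ m * (1 - m ^ 2 / n) = 2 ^ m * (n ^ m * (1 + (m:ℝ) * (-(m / n)))) := by
        rw [mul_pow]; ring
    _ ≤ 2 ^ m * (n ^ m * (1 + -(m / n : ℝ)) ^ m) := by gcongr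
    _ ≤ 2 ^ m * n.descFactorial m := by rw [← h4]; gcongr
    _ = _ := by ring

variable {X : Type*} [PseudoMetricSpace X] [MeasurableSpace X] [OpensMeasurableSpace X]
  [SecondCountableTopology X] (μ : Measure X) [IsProbabilityMeasure μ]
variable {n m : ℕ} {p c c0 : ℝ}

/-- Lower bound for the mean number of paths. The region `Q` of measure `q` consists of points
whose ball of radius `r` has full measure `p`. -/
lemma first_moment (h : Params n m p c c0) (r : ℝ) {q : ℝ} (hq : 0 ≤ q) (hmn : m ^ 2 ≤ n)
    (hn : 1 ≤ n) (Q : Set X) (hQm : MeasurableSet Q) (hQ : μ Q = ENNReal.ofReal q)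
    (hge : ∀ a ∈ Q, ENNReal.ofReal p ≤ μ (Metric.closedBall a r))
    (hle : ∀ a, μ (Metric.closedBall a r) ≤ ENNReal.ofReal p) :
    ENNReal.ofReal (p * c ^ m * ((1 - m ^ 2 / n) * (q ^ (m + 1) - 4 * (m + 1) ^ 2 * p))) ≤
    ∫⁻ w, ∫⁻ e, numPaths X n r m (w, e) ∂Measure.pi (fun _ => μ) ∂Measure.pi (fun _ => μ) := by
  have hp0 := h.hp
  have hn' : (0:ℝ) < n := by exact_mod_cast hn
  have hA : 0 ≤ (1 - (m:ℝ) ^ 2 / n) := by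
    have : (m:ℝ) ^ 2 / n ≤ 1 := by rw [div_le_one hn']; exact_mod_cast hmn
    linarith
  rw [lintegral_numPaths]
  have hz : ∀ z ∈ valid n m, ENNReal.ofReal ((q * p) ^ (m + 1) - 4 * (m + 1) ^ 2 * p ^ (m + 2)) ≤
      Measure.pi (fun _ => μ) (copyEv X r Sum.inl z) := by
    intro z hz
    simp only [valid, Finset.mem_filter, Finset.mem_univ, true_and] at hz
    have hinj : Function.Injective (Sum.elim (tails (Sum.inl (β := Fin 2 ⊕ Fin 2))
        (Sum.inr (Sum.inl 0)) z) (heads Sum.inl z (Sum.inr (Sum.inl 1)))) :=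
      tails_heads_injective Sum.inl_injective (by simp) (by simp) (by simp) hz
    have h1 := path_ge μ r (ENNReal.ofReal p) (ENNReal.ofReal q) Q hQm hQ hge hinj
    have h2 := path_le_ind μ r (ENNReal.ofReal p) hle hinj
    rw [Fintype.card_fin] at h1 h2
    rw [ENNReal.ofReal_sub _ (by positivity)]
    rw [tsub_le_iff_right]
    refine le_trans (le_of_eq ?_) ((h1.trans h2).trans (add_le_add_right (le_of_eq ?_) _))
    · rw [← ENNReal.ofReal_mul hq, ENNReal.ofReal_pow (by positivity)]
    · rw [← ENNReal.ofReal_natCast, ← ENNReal.ofReal_pow hp0, ← ENNReal.ofReal_mul (by positivity)]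
      congr 1
      push_cast
      ring
  have hmn' : m ≤ n := le_trans (by nlinarith [Nat.zero_le m]) hmn
  have hcard : ENNReal.ofReal ((2 * n : ℝ) ^ m * (1 - m ^ 2 / n)) ≤ (valid n m).card := by
    rw [← ENNReal.ofReal_natCast]
    exact ENNReal.ofReal_le_ofReal (card_valid_ge hn hmn')
  calc _ = ENNReal.ofReal ((2 * n : ℝ) ^ m * (1 - m ^ 2 / n)) *
        ENNReal.ofReal ((q * p) ^ (m + 1) - 4 * (m + 1) ^ 2 * p ^ (m + 2)) := by
        rw [← ENNReal.ofReal_mul (by positivity), h.hc]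
        congr 1
        ring
    _ ≤ (valid n m).card *
        ENNReal.ofReal ((q * p) ^ (m + 1) - 4 * (m + 1) ^ 2 * p ^ (m + 2)) := by gcongr
    _ = ∑ z ∈ valid n m, ENNReal.ofReal ((q * p) ^ (m + 1) - 4 * (m + 1) ^ 2 * p ^ (m + 2)) := by
        rw [Finset.sum_const, nsmul_eq_mul]
    _ ≤ _ := Finset.sum_le_sum hz

end FirstMoment

/-! ### Concentration -/

section Concentration
variable {W E : Type*} [MeasurableSpace W] [MeasurableSpace E]
  (ρ : Measure W) [IsProbabilityMeasure ρ] (ν : Measure E) [IsProbabilityMeasure ν]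

/-- Cauchy–Schwarz: a lower bound for the probability that `f` does not vanish. -/
lemma sq_lintegral_le {f : E → ℝ≥0∞} (hf : Measurable f) :
    (∫⁻ e, f e ∂ν) ^ 2 ≤ (∫⁻ e, f e ^ 2 ∂ν) * ν {e | f e ≠ 0} := by
  have hS : MeasurableSet {e | f e ≠ 0} := (hf (measurableSet_singleton 0)).compl
  have h := ENNReal.lintegral_mul_le_Lp_mul_Lq ν Real.HolderConjugate.two_two hf.aemeasurable
    ((measurable_one (α := ℝ≥0∞)).indicator hS).aemeasurable
  have h1 : ∀ e, (f * ({e | f e ≠ 0}.indicator (1 : E → ℝ≥0∞))) e = f e := by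
    intro e
    by_cases he : f e = 0 <;> simp [he]
  have h2 : ∀ e, ({e | f e ≠ 0}.indicator (1 : E → ℝ≥0∞) e) ^ (2:ℝ) =
      {e | f e ≠ 0}.indicator 1 e := by
    intro e
    by_cases he : f e = 0 <;> simp [he]
  simp only [h1, h2, lintegral_indicator_one hS] at h
  have h3 := pow_le_pow_left₀ (zero_le) h 2
  refine h3.trans (le_of_eq ?_)
  rw [mul_pow, ← ENNReal.rpow_mul_natCast, ← ENNReal.rpow_mul_natCast]
  norm_num

/-- Chebyshev's inequality for a function `G` whose second moment is close to the square of its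
mean. -/
lemma chebyshev_half {G : W → ℝ≥0∞} (hG : Measurable G) {a θ : ℝ} (ha : 0 < a) (hθ : 0 ≤ θ)
    (h1 : ∫⁻ w, G w ∂ρ = ENNReal.ofReal a)
    (h2 : ∫⁻ w, G w ^ 2 ∂ρ ≤ ENNReal.ofReal (a ^ 2 * (1 + θ))) :
    ρ {w | G w < ENNReal.ofReal (a / 2)} ≤ ENNReal.ofReal (4 * θ) := by
  set A := {w | G w < ENNReal.ofReal (a / 2)} with hA
  have hAm : MeasurableSet A := measurableSet_lt hG measurable_const
  have key : ∀ w, ENNReal.ofReal (a ^ 2 / 4) * A.indicator 1 w + ENNReal.ofReal (2 * a) * G w ≤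
      G w ^ 2 + ENNReal.ofReal (a ^ 2) := by
    intro w
    by_cases ht : G w = ⊤
    · rw [ht]; simp
    obtain ⟨g, hg⟩ : ∃ g : NNReal, G w = g := ⟨_, (ENNReal.coe_toNNReal ht).symm⟩
    have hg' : G w = ENNReal.ofReal g := by rw [hg, ENNReal.ofReal_coe_nnreal]
    have hg0 : (0:ℝ) ≤ g := g.2
    by_cases hw : w ∈ A
    · rw [Set.indicator_of_mem hw, hg', Pi.one_apply, mul_one, ← ENNReal.ofReal_mul (by positivity),
        ← ENNReal.ofReal_pow hg0, ← ENNReal.ofReal_add (by positivity) (by positivity),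
        ← ENNReal.ofReal_add (by positivity) (by positivity)]
      rw [hA, Set.mem_ofPred_eq, hg', ENNReal.ofReal_lt_ofReal_iff (by positivity)] at hw
      refine ENNReal.ofReal_le_ofReal ?_
      nlinarith
    · rw [Set.indicator_of_notMem hw, hg', mul_zero, zero_add, ← ENNReal.ofReal_mul (by positivity),
        ← ENNReal.ofReal_pow hg0, ← ENNReal.ofReal_add (by positivity) (by positivity)]
      refine ENNReal.ofReal_le_ofReal ?_
      nlinarith [sq_nonneg (g - a)]
  have h3 := lintegral_mono (μ := ρ) key
  have hAi : Measurable (A.indicator (1 : W → ℝ≥0∞)) := measurable_one.indicator hAm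
  rw [lintegral_add_left (hAi.const_mul _),
    lintegral_const_mul _ hAi, lintegral_indicator_one hAm,
    lintegral_const_mul _ hG, h1, lintegral_add_right _ measurable_const, lintegral_const,
    measure_univ, mul_one] at h3
  have h4 := h3.trans (add_le_add_left h2 _)
  have hfin : ρ A ≠ ⊤ := measure_ne_top _ _
  obtain ⟨s, hs⟩ : ∃ s : NNReal, ρ A = s := ⟨_, (ENNReal.coe_toNNReal hfin).symm⟩
  have hs' : ρ A = ENNReal.ofReal s := by rw [hs, ENNReal.ofReal_coe_nnreal]
  have hs0 : (0:ℝ) ≤ s := s.2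
  rw [hs', ← ENNReal.ofReal_mul (by positivity), ← ENNReal.ofReal_mul (by positivity),
    ← ENNReal.ofReal_add (by positivity) (by positivity),
    ← ENNReal.ofReal_add (by positivity) (by positivity),
    ENNReal.ofReal_le_ofReal_iff (by positivity)] at h4
  rw [hs']
  refine ENNReal.ofReal_le_ofReal ?_
  have h5 : a ^ 2 * s ≤ a ^ 2 * (4 * θ) := by nlinarith
  exact le_of_mul_le_mul_left h5 (by positivity)

/-- If the mean of `f` over `e` is concentrated as a function of `w` and the conditional second
moment is not too large on average, then for most `w` the support of `f (w, ·)` has probability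
bounded below. -/
lemma support_large {f : W × E → ℝ≥0∞} (hf : Measurable f) {L δ₁ δ₂ P K : ℝ} (hL : 1 ≤ L)
    (hδ₁ : 0 ≤ δ₁) (hδ₁' : δ₁ ≤ 1 / 2) (hδ₂ : 0 ≤ δ₂) (hP : 0 ≤ P) (hK : 0 < K)
    (hfin : ∫⁻ w, ∫⁻ e, f (w, e) ∂ν ∂ρ ≠ ⊤)
    (h1 : ENNReal.ofReal (L * (1 - δ₁)) ≤ ∫⁻ w, ∫⁻ e, f (w, e) ∂ν ∂ρ)
    (h2 : ∫⁻ w, (∫⁻ e, f (w, e) ∂ν) ^ 2 ∂ρ ≤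
      (∫⁻ w, ∫⁻ e, f (w, e) ∂ν ∂ρ) * ENNReal.ofReal (L * (1 + δ₂)))
    (h3 : ∫⁻ w, ∫⁻ e, f (w, e) ^ 2 ∂ν ∂ρ ≤
      (∫⁻ w, ∫⁻ e, f (w, e) ∂ν ∂ρ) * ENNReal.ofReal (1 + P * L)) :
    ρ {w | ν {e | f (w, e) ≠ 0} < ENNReal.ofReal (1 / (8 * K * (1 + P)))} ≤
      ENNReal.ofReal (8 * (δ₁ + δ₂)) + ENNReal.ofReal (1 / K) := by
  set a := (∫⁻ w, ∫⁻ e, f (w, e) ∂ν ∂ρ).toReal with ha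
  have haE : ∫⁻ w, ∫⁻ e, f (w, e) ∂ν ∂ρ = ENNReal.ofReal a := (ENNReal.ofReal_toReal hfin).symm
  rw [haE] at h1 h2 h3
  have ha0 : 0 ≤ a := ENNReal.toReal_nonneg
  rw [ENNReal.ofReal_le_ofReal_iff ha0] at h1
  have hapos : 0 < a := by nlinarith
  rw [← ENNReal.ofReal_mul ha0] at h2 h3
  have hGm : Measurable fun w => ∫⁻ e, f (w, e) ∂ν := hf.lintegral_prod_right'
  have hFm : Measurable fun w => ∫⁻ e, f (w, e) ^ 2 ∂ν := (hf.pow_const 2).lintegral_prod_right'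
  have hA := chebyshev_half ρ hGm (θ := 2 * (δ₁ + δ₂)) hapos (by positivity) haE
    (h2.trans (ENNReal.ofReal_le_ofReal (by
      have : L * (1 + δ₂) ≤ a * (1 + 2 * (δ₁ + δ₂)) := by
        have h5 : L * (1 - δ₁) * (1 + 2 * (δ₁ + δ₂)) ≤ a * (1 + 2 * (δ₁ + δ₂)) := by gcongr
        refine le_trans ?_ h5
        have h6 : 1 + δ₂ ≤ (1 - δ₁) * (1 + 2 * (δ₁ + δ₂)) := by nlinarith
        nlinarith
      nlinarith)))
  set t := K * (a * (1 + P * L)) with ht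
  have htpos : 0 < t := by positivity
  have hB : ρ {w | ENNReal.ofReal t ≤ ∫⁻ e, f (w, e) ^ 2 ∂ν} ≤ ENNReal.ofReal (1 / K) := by
    have := meas_ge_le_lintegral_div (μ := ρ) hFm.aemeasurable (ε := ENNReal.ofReal t)
      (by simpa using htpos) ENNReal.ofReal_ne_top
    refine this.trans ((ENNReal.div_le_div_right h3 _).trans ?_)
    rw [← ENNReal.ofReal_div_of_pos htpos]
    refine ENNReal.ofReal_le_ofReal (le_of_eq ?_)
    rw [ht]; field_simp
  refine le_trans (measure_mono (t := {w | ∫⁻ e, f (w, e) ∂ν < ENNReal.ofReal (a / 2)} ∪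
    {w | ENNReal.ofReal t ≤ ∫⁻ e, f (w, e) ^ 2 ∂ν}) ?_)
    ((measure_union_le _ _).trans (add_le_add (hA.trans (le_of_eq (by ring_nf))) hB))
  intro w hw
  by_contra hcon
  simp only [Set.mem_union, Set.mem_ofPred_eq, not_or, not_lt, not_le] at hcon hw
  obtain ⟨hw1, hw2⟩ := hcon
  have hcs := sq_lintegral_le ν (f := fun e => f (w, e)) (hf.comp measurable_prodMk_left)
  have h8 : ENNReal.ofReal (a / 2) ^ 2 <
      ENNReal.ofReal t * ENNReal.ofReal (1 / (8 * K * (1 + P))) := by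
    refine (pow_le_pow_left₀ zero_le hw1 2).trans_lt (hcs.trans_lt ?_)
    refine (mul_le_mul' hw2.le le_rfl).trans_lt ?_
    exact (ENNReal.mul_lt_mul_iff_right (by simpa using htpos) ENNReal.ofReal_ne_top).2 hw
  rw [← ENNReal.ofReal_pow (by positivity), ← ENNReal.ofReal_mul htpos.le,
    ENNReal.ofReal_lt_ofReal_iff (by positivity), ht] at h8
  have h9 : K * (a * (1 + P * L)) * (1 / (8 * K * (1 + P))) = a * (1 + P * L) / (8 * (1 + P)) := by
    field_simp
  rw [h9, lt_div_iff₀ (by positivity)] at h8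
  have h10 : L ≤ 2 * a := by nlinarith
  have h11 : L * (1 + P) ≤ 2 * a * (1 + P) := by gcongr
  have h12 : 1 + P * L ≤ 2 * a * (1 + P) := by linarith
  have h13 := mul_le_mul_of_nonneg_left h12 hapos.le
  linarith

end Concentration

/-! ### Blocks of reserve variables -/

section Blocks
variable {X : Type*} [MeasurableSpace X] (μ : Measure X) [IsProbabilityMeasure μ]

lemma measurePreserving_comp_equiv {I I' : Type*} [Fintype I] [Fintype I'] (e : I ≃ I') :
    MeasurePreserving (fun ω : I' → X => ω ∘ e) (Measure.pi fun _ => μ) (Measure.pi fun _ => μ) := by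
  have hm : Measurable fun ω : I' → X => ω ∘ e :=
    measurable_pi_lambda _ fun i => measurable_pi_apply _
  refine ⟨hm, (Measure.pi_eq fun s hs => ?_).symm⟩
  rw [Measure.map_apply hm (MeasurableSet.univ_pi hs)]
  have : (fun ω : I' → X => ω ∘ e) ⁻¹' Set.univ.pi s = Set.univ.pi fun i => s (e.symm i) := by
    ext ω
    simp only [Set.mem_preimage, Set.mem_univ_pi, Function.comp_apply]
    exact ⟨fun h i => by simpa using h (e.symm i), fun h i => by simpa using h (e i)⟩
  rw [this, Measure.pi_pi, ← e.prod_comp]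
  simp

lemma measurePreserving_curry {I J : Type*} [Fintype I] [Fintype J] :
    MeasurePreserving (fun (ω : I × J → X) i j => ω (i, j)) (Measure.pi fun _ => μ)
      (Measure.pi fun _ => Measure.pi fun _ => μ) := by
  refine ⟨by fun_prop, ?_⟩
  have := Measure.infinitePi_map_curry (ι := I) (κ := J) (X := X)
    (fun _ _ => μ)
  simp only [Measure.infinitePi_eq_pi] at this
  exact this

/-- Two leaves attached to a common centre: the probability that both pairs lie in `T` is at least
the square of the probability of `T`. -/
lemma star_ge {T : Set (Fin 2 → X)} (hT : MeasurableSet T) :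
    (Measure.pi (fun _ : Fin 2 => μ) T) ^ 2 ≤
      Measure.pi (fun _ : Fin 3 => μ) {y | ∀ i : Fin 2, ![y 0, y i.succ] ∈ T} := by
  have hm2 : Measurable fun q : X × X => (![q.1, q.2] : Fin 2 → X) := by
    refine measurable_pi_lambda _ fun i => ?_
    fin_cases i
    · exact measurable_fst
    · exact measurable_snd
  have hT2 : MeasurableSet {q : X × X | ![q.1, q.2] ∈ T} := hm2 hT
  set deg : X → ℝ≥0∞ := fun x => μ {v | ![x, v] ∈ T} with hdeg
  have hdm : Measurable deg := measurable_measure_prodMk_left hT2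
  have h1 : Measure.pi (fun _ : Fin 2 => μ) T = ∫⁻ x, deg x ∂μ := by
    have h := (measurePreserving_finTwoArrow μ).measure_preimage hT2.nullMeasurableSet
    rw [Measure.prod_apply hT2] at h
    rw [← show _ = ∫⁻ x, deg x ∂μ from h]
    congr 1
    ext ω
    have : ω = ![ω 0, ω 1] := by ext i; fin_cases i <;> rfl
    show ω ∈ T ↔ ![ω 0, ω 1] ∈ T
    rw [← this]
  have hS : MeasurableSet {q : X × (Fin 2 → X) | ∀ i, ![q.1, q.2 i] ∈ T} := by
    have : {q : X × (Fin 2 → X) | ∀ i, ![q.1, q.2 i] ∈ T} =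
      ⋂ i : Fin 2, (fun q : X × (Fin 2 → X) => (q.1, q.2 i)) ⁻¹' {q : X × X | ![q.1, q.2] ∈ T} := by
      ext q; simp
    rw [this]
    exact MeasurableSet.iInter fun i => (by fun_prop : Measurable _) hT2
  have h2 : Measure.pi (fun _ : Fin 3 => μ) {y | ∀ i : Fin 2, ![y 0, y i.succ] ∈ T} =
      ∫⁻ x, deg x ^ 2 ∂μ := by
    have h := (measurePreserving_piFinSuccAbove (fun _ : Fin 3 => μ) 0).measure_preimage
      hS.nullMeasurableSet
    rw [Measure.prod_apply hS] at h
    refine Eq.trans ?_ (h.trans (lintegral_congr fun x => ?_))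
    · rfl
    · have : Prod.mk x ⁻¹' {q : X × (Fin 2 → X) | ∀ i, ![q.1, q.2 i] ∈ T} =
          Set.univ.pi fun _ : Fin 2 => {v | ![x, v] ∈ T} := by
        ext u; simp
      rw [this, Measure.pi_pi, Finset.prod_const, Finset.card_univ, Fintype.card_fin]
  rw [h1, h2]
  refine (sq_lintegral_le μ hdm).trans ?_
  exact mul_le_of_le_one_right' prob_le_one

/-- The configurations of a block of two stars for which all four pairs lie in `T`. -/
def badBlock (T : Set (Fin 2 → X)) : Set (Bool → Fin 3 → X) :=
  {y | ∀ s, ∀ i : Fin 2, ![y s 0, y s i.succ] ∈ T}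

lemma badBlock_ge {T : Set (Fin 2 → X)} (hT : MeasurableSet T) :
    (Measure.pi (fun _ : Fin 2 => μ) T) ^ 4 ≤
      Measure.pi (fun _ : Bool => Measure.pi (fun _ : Fin 3 => μ)) (badBlock T) := by
  have : badBlock T = Set.univ.pi fun _ : Bool => {y | ∀ i : Fin 2, ![y 0, y i.succ] ∈ T} := by
    ext y; simp [badBlock]
  rw [this, Measure.pi_pi, Finset.prod_const, Finset.card_univ, Fintype.card_bool]
  calc _ = ((Measure.pi (fun _ : Fin 2 => μ) T) ^ 2) ^ 2 := by rw [← pow_mul]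
    _ ≤ _ := pow_le_pow_left₀ zero_le (star_ge μ hT) 2

/-- Probability that none of `k` independent blocks has all its pairs in `T`. -/
lemma no_badBlock_le {T : Set (Fin 2 → X)} (hT : MeasurableSet T) (k : ℕ) {τ : ℝ} (hτ : 0 ≤ τ)
    (h : ENNReal.ofReal τ ≤ Measure.pi (fun _ : Fin 2 => μ) T)
    (hTm : MeasurableSet (badBlock T)) :
    Measure.pi (fun _ : Fin k => Measure.pi (fun _ : Bool => Measure.pi (fun _ : Fin 3 => μ)))
      {y | ∀ j, y j ∉ badBlock T} ≤ ENNReal.ofReal ((1 - τ ^ 4) ^ k) := by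
  have : {y : Fin k → Bool → Fin 3 → X | ∀ j, y j ∉ badBlock T} =
      Set.univ.pi fun _ => (badBlock T)ᶜ := by ext y; simp
  rw [this, Measure.pi_pi, Finset.prod_const, Finset.card_univ, Fintype.card_fin]
  have hτ1 : τ ≤ 1 := by
    have := h.trans prob_le_one
    rwa [← ENNReal.ofReal_one, ENNReal.ofReal_le_ofReal_iff zero_le_one] at this
  have h4 : τ ^ 4 ≤ 1 := pow_le_one₀ hτ hτ1
  rw [ENNReal.ofReal_pow (by linarith)]
  refine pow_le_pow_left₀ zero_le ?_ k
  rw [prob_compl_eq_one_sub hTm, ENNReal.ofReal_sub _ (by positivity), ENNReal.ofReal_one]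
  refine tsub_le_tsub_left ?_ 1
  rw [ENNReal.ofReal_pow hτ]
  exact (pow_le_pow_left₀ zero_le h 4).trans (badBlock_ge μ hT)

end Blocks

section Chain
variable {d n n' m : ℕ}

/-- A path of clauses between the literals `a` and `b`, through literals of the variables in the range
of `φ`, forces one of `a` and `b` to be true. -/
lemma chain {r : ℝ} {ω : Fin n × Bool → (Fin d → ℝ)} {α : Fin n → Bool}
    (hα : ∀ a b, gadj r ω a b → α a.1 = a.2 ∨ α b.1 = b.2)
    {φ : Fin n' → Fin n} (hφ : Function.Injective φ) {a b : Fin n × Bool} (hab : a ≠ b)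
    (ha : ∀ v, φ v ≠ a.1) (hb : ∀ v, φ v ≠ b.1)
    (h : numPaths (Fin d → ℝ) n' r m (fun v => ω (φ v.1, v.2), ![ω a, ω b]) ≠ 0) :
    α a.1 = a.2 ∨ α b.1 = b.2 := by
  rw [numPaths, Ne, Finset.sum_eq_zero_iff] at h
  push Not at h
  obtain ⟨z, hz, h⟩ := h
  simp only [valid, Finset.mem_filter, Finset.mem_univ, true_and] at hz
  have hmem := Set.mem_of_indicator_ne_zero h
  have hp := hmem.1
  simp only [pathEv, Set.mem_ofPred_eq] at hp
  by_contra hcon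
  push Not at hcon
  obtain ⟨hca, hcb⟩ := hcon
  set loc : Fin n' × Bool → Fin n × Bool := fun v => (φ v.1, v.2) with hloc
  -- Every literal of the path is true when its first end point is false.
  have htrue : ∀ i : ℕ, ∀ hi : i < m, α (loc (z ⟨i, hi⟩)).1 = (loc (z ⟨i, hi⟩)).2 := by
    intro i
    induction i with
    | zero =>
      intro hi
      have h0 := hp (Fin.castSucc ⟨0, hi⟩)
      have e1 : (Fin.castSucc (⟨0, hi⟩ : Fin m)) = 0 := rfl
      rw [heads, Fin.snoc_castSucc, e1, tails, Fin.cons_zero] at h0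
      refine (hα a (loc (z ⟨0, hi⟩)) ⟨?_, h0⟩).resolve_left hca
      exact fun h => ha _ (congrArg Prod.fst h).symm
    | succ i ih =>
      intro hi
      have hi' : i < m := by omega
      have h0 := hp (Fin.castSucc ⟨i + 1, hi⟩)
      have e1 : (Fin.castSucc (⟨i + 1, hi⟩ : Fin m)) = Fin.succ ⟨i, hi'⟩ := rfl
      rw [heads, Fin.snoc_castSucc, e1, tails, Fin.cons_succ] at h0
      refine (hα (loc (lneg (z ⟨i, hi'⟩))) (loc (z ⟨i + 1, hi⟩)) ⟨?_, h0⟩).resolve_left ?_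
      · intro h
        have h1 : φ (z ⟨i, hi'⟩).1 = φ (z ⟨i + 1, hi⟩).1 := congrArg Prod.fst h
        have := hz (hφ h1)
        simp at this
      · have := ih hi'
        simp only [hloc, lneg] at this ⊢
        rw [this]
        simp
  have h0 := hp (Fin.last m)
  rw [heads, Fin.snoc_last] at h0
  rcases m with _ | m
  · refine (hα a b ⟨hab, h0⟩).elim hca hcb
  · rw [← Fin.succ_last, tails, Fin.cons_succ] at h0
    have hne : loc (lneg (z (Fin.last m))) ≠ b := fun h => hb _ (congrArg Prod.fst h)
    have h3 := (hα (loc (lneg (z (Fin.last m)))) b ⟨hne, h0⟩).resolve_right hcb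
    have := htrue m (by omega)
    have h2 : (⟨m, by omega⟩ : Fin (m + 1)) = Fin.last m := rfl
    rw [h2] at this
    simp only [hloc, lneg] at this h3
    rw [this] at h3
    simp at h3

end Chain

/-! ### Splitting the literals -/

section Decompose
variable {n1 k n : ℕ}

/-- Literals of a block of three variables, arranged as two stars: the centres are the two literals
of the middle variable, the leaves of a star are the two literals of one of the outer variables. -/
noncomputable def blockLit : Bool × Fin 3 ≃ Fin 3 × Bool :=
  Equiv.ofBijective
    (fun q => if q.2 = 0 then (1, q.1) else (if q.1 then 0 else 2, decide (q.2 = 1)))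
    (by decide)

/-- The literals over `n` variables, split into the literals of the `n1` main variables and of `k`
blocks of three reserve variables. -/
noncomputable def litEquiv (φ : Fin n1 ⊕ (Fin k × Fin 3) ≃ Fin n) :
    (Fin n1 × Bool) ⊕ ((Fin k × Bool) × Fin 3) ≃ Fin n × Bool :=
  ((Equiv.refl _).sumCongr ((Equiv.prodAssoc _ _ _).trans
    (((Equiv.refl _).prodCongr blockLit).trans (Equiv.prodAssoc _ _ _).symm))).trans
    ((Equiv.sumProdDistrib _ _ _).symm.trans (φ.prodCongr (Equiv.refl _)))

lemma litEquiv_inl (φ : Fin n1 ⊕ (Fin k × Fin 3) ≃ Fin n) (v : Fin n1 × Bool) :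
    litEquiv φ (Sum.inl v) = (φ (Sum.inl v.1), v.2) := rfl

lemma litEquiv_inr (φ : Fin n1 ⊕ (Fin k × Fin 3) ≃ Fin n) (j : Fin k) (s : Bool) (i : Fin 3) :
    litEquiv φ (Sum.inr ((j, s), i)) =
      (φ (Sum.inr (j, (blockLit (s, i)).1)), (blockLit (s, i)).2) := rfl

variable {X : Type*} [MeasurableSpace X] (μ : Measure X) [IsProbabilityMeasure μ]

/-- The placements of the main literals and of the literals of the blocks. -/
noncomputable def splitMap (X : Type*) (φ : Fin n1 ⊕ (Fin k × Fin 3) ≃ Fin n)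
    (ω : Fin n × Bool → X) :
    (Fin n1 × Bool → X) × (Fin k → Bool → Fin 3 → X) :=
  (fun v => ω (litEquiv φ (Sum.inl v)), fun j s i => ω (litEquiv φ (Sum.inr ((j, s), i))))

lemma measurePreserving_splitMap (φ : Fin n1 ⊕ (Fin k × Fin 3) ≃ Fin n) :
    MeasurePreserving (splitMap X φ) (Measure.pi fun _ => μ)
      ((Measure.pi fun _ => μ).prod
        (Measure.pi fun _ => Measure.pi fun _ => Measure.pi fun _ => μ)) := by
  have h1 := measurePreserving_comp_equiv μ (litEquiv φ)
  have h2 := measurePreserving_sumPiEquivProdPi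
    (X := fun _ : (Fin n1 × Bool) ⊕ ((Fin k × Bool) × Fin 3) => X) (fun _ => μ)
  have h3 := measurePreserving_curry (I := Fin k × Bool) (J := Fin 3) μ
  have h4 := measurePreserving_curry (I := Fin k) (J := Bool) (Measure.pi fun _ : Fin 3 => μ)
  exact ((MeasurePreserving.id (Measure.pi fun _ : Fin n1 × Bool => μ)).prod (h4.comp h3)).comp
    (h2.comp h1)

end Decompose

section Sat
variable {d n1 k n m : ℕ}

/-- The pairs of end points that are joined by an induced path. -/
def joined (d n m : ℕ) (r : ℝ) (w : Fin n × Bool → (Fin d → ℝ)) : Set (Fin 2 → (Fin d → ℝ)) :=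
  {e | numPaths (Fin d → ℝ) n r m (w, e) ≠ 0}

lemma measurableSet_joined (r : ℝ) :
    MeasurableSet {q : (Fin n × Bool → (Fin d → ℝ)) × (Fin 2 → (Fin d → ℝ)) |
      q.2 ∈ joined d n m r q.1} :=
  (measurable_numPaths (X := Fin d → ℝ) (n := n) r m (measurableSet_singleton 0)).compl

/-- In a contradictory block, with `w₁, w₂, w₃` its variables, both signs of `w₂` are forced: the paths
from a literal of `w₂` to `u` and to `¬ u`, for an outer variable `u`, force that literal to be
true. -/
lemma not_badBlock_of_sat (φ : Fin n1 ⊕ (Fin k × Fin 3) ≃ Fin n) {r : ℝ} (hr : 0 ≤ r)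
    {ω : Fin n × Bool → (Fin d → ℝ)} (h : GeomSatisfiable d 2 n r ω) (j : Fin k) :
    (splitMap _ φ ω).2 j ∉ badBlock (joined d n1 m r (splitMap _ φ ω).1) := by
  intro hbad
  obtain ⟨α, hα⟩ := (geomSat_iff hr ω).1 h
  have key : ∀ s, ∀ i : Fin 2, α (litEquiv φ (Sum.inr ((j, s), 0))).1 =
      (litEquiv φ (Sum.inr ((j, s), 0))).2 ∨ α (litEquiv φ (Sum.inr ((j, s), i.succ))).1 =
      (litEquiv φ (Sum.inr ((j, s), i.succ))).2 := by
    intro s i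
    refine chain (m := m) (φ := fun v => φ (Sum.inl v)) hα
      (φ.injective.comp Sum.inl_injective) ?_ ?_ ?_ (hbad s i)
    · rw [(litEquiv φ).injective.ne_iff]
      simpa using (Fin.succ_ne_zero i).symm
    · intro v; rw [litEquiv_inr]; simp
    · intro v; rw [litEquiv_inr]; simp
  have hb0 : ∀ s, blockLit (s, 0) = (1, s) := by intro s; rfl
  have hb1 : ∀ s, blockLit (s, 1) = (if s then 0 else 2, true) := by intro s; rfl
  have hb2 : ∀ s, blockLit (s, 2) = (if s then 0 else 2, false) := by intro s; rfl
  have k1 := fun s => key s 0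
  have k2 := fun s => key s 1
  have e0 : Fin.succ (0 : Fin 2) = 1 := rfl
  have e1 : Fin.succ (1 : Fin 2) = 2 := rfl
  simp only [litEquiv_inr, hb0, e0, e1, hb1, hb2] at k1 k2
  have hs : ∀ s, α (φ (Sum.inr (j, 1))) = s := by
    intro s
    rcases k1 s with h | h
    · exact h
    rcases k2 s with h' | h'
    · exact h'
    rw [h] at h'
    simp at h'
  have := (hs true).symm.trans (hs false)
  simp at this

/-- Satisfiability requires that either few pairs of end points are joined by paths of main
literals, or none of the blocks is contradictory. -/
lemma sat_le (φ : Fin n1 ⊕ (Fin k × Fin 3) ≃ Fin n) {r : ℝ} (hr : 0 ≤ r) (m : ℕ) {τ : ℝ}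
    (hτ : 0 ≤ τ) :
    placementMeasure d n {ω | GeomSatisfiable d 2 n r ω} ≤
      Measure.pi (fun _ => unitCubeMeasure d) {w : Fin n1 × Bool → (Fin d → ℝ) |
        Measure.pi (fun _ => unitCubeMeasure d) {e : Fin 2 → (Fin d → ℝ) |
          numPaths (Fin d → ℝ) n1 r m (w, e) ≠ 0} < ENNReal.ofReal τ} +
      ENNReal.ofReal ((1 - τ ^ 4) ^ k) := by
  set μ := unitCubeMeasure d with hμ
  set D : Set ((Fin n1 × Bool → (Fin d → ℝ)) × (Fin k → Bool → Fin 3 → (Fin d → ℝ))) :=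
    {q | ∀ j, q.2 j ∉ badBlock (joined d n1 m r q.1)} with hD
  have hpair : ∀ (j : Fin k) (s : Bool) (i : Fin 2), Measurable
      fun q : (Fin n1 × Bool → (Fin d → ℝ)) × (Fin k → Bool → Fin 3 → (Fin d → ℝ)) =>
        (q.1, (![q.2 j s 0, q.2 j s i.succ] : Fin 2 → (Fin d → ℝ))) := by
    intro j s i
    refine measurable_fst.prodMk (measurable_pi_lambda _ fun l => ?_)
    have h : ∀ i : Fin 3, Measurable
      fun q : (Fin n1 × Bool → (Fin d → ℝ)) × (Fin k → Bool → Fin 3 → (Fin d → ℝ)) =>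
        q.2 j s i := fun i => (measurable_pi_apply i).comp ((measurable_pi_apply s).comp
          ((measurable_pi_apply j).comp measurable_snd))
    fin_cases l
    · exact h 0
    · exact h i.succ
  have hDm : MeasurableSet D := by
    have : D = ⋂ j : Fin k, (⋂ s : Bool, ⋂ i : Fin 2, (fun q => (q.1, ![q.2 j s 0, q.2 j s i.succ])) ⁻¹'
        {q : (Fin n1 × Bool → (Fin d → ℝ)) × (Fin 2 → (Fin d → ℝ)) |
          q.2 ∈ joined d n1 m r q.1})ᶜ := by
      ext q
      simp only [hD, badBlock, Set.mem_ofPred_eq, Set.mem_iInter, Set.mem_compl_iff,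
        Set.mem_preimage]
    rw [this]
    exact MeasurableSet.iInter fun j => (MeasurableSet.iInter fun s => MeasurableSet.iInter fun i =>
      hpair j s i (measurableSet_joined r)).compl
  have hjm : ∀ w, MeasurableSet (joined d n1 m r w) := fun w =>
    measurable_prodMk_left (measurableSet_joined (m := m) (n := n1) (d := d) r)
  have hbm : ∀ w, MeasurableSet (badBlock (joined d n1 m r w)) := by
    intro w
    have : badBlock (joined d n1 m r w) = ⋂ s : Bool, ⋂ i : Fin 2, (fun y : Bool → Fin 3 → (Fin d → ℝ) =>
        (![y s 0, y s i.succ] : Fin 2 → (Fin d → ℝ))) ⁻¹' joined d n1 m r w := by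
      ext q
      simp only [badBlock, Set.mem_ofPred_eq, Set.mem_iInter, Set.mem_preimage]
    rw [this]
    refine MeasurableSet.iInter fun s => MeasurableSet.iInter fun i => ?_
    refine measurableSet_preimage (measurable_pi_lambda _ fun l => ?_) (hjm w)
    have h : ∀ i : Fin 3, Measurable fun y : Bool → Fin 3 → (Fin d → ℝ) => y s i :=
      fun i => (measurable_pi_apply i).comp (measurable_pi_apply s)
    fin_cases l
    · exact h 0
    · exact h i.succ
  have h1 : placementMeasure d n {ω | GeomSatisfiable d 2 n r ω} ≤
      Measure.pi (fun _ => μ) (splitMap _ φ ⁻¹' D) :=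
    measure_mono fun ω hω j => not_badBlock_of_sat φ hr hω j
  rw [(measurePreserving_splitMap μ φ).measure_preimage hDm.nullMeasurableSet,
    Measure.prod_apply hDm] at h1
  refine h1.trans ?_
  set B := {w : Fin n1 × Bool → (Fin d → ℝ) |
    Measure.pi (fun _ => μ) {e : Fin 2 → (Fin d → ℝ) |
          numPaths (Fin d → ℝ) n1 r m (w, e) ≠ 0} < ENNReal.ofReal τ} with hB
  have hBm : MeasurableSet B :=
    measurableSet_lt (measurable_measure_prodMk_left
      (measurableSet_joined (m := m) (n := n1) (d := d) r)) measurable_const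
  calc _ ≤ ∫⁻ w, (B.indicator 1 w + ENNReal.ofReal ((1 - τ ^ 4) ^ k))
        ∂(Measure.pi fun _ => μ) := by
        refine lintegral_mono fun w => ?_
        by_cases hw : w ∈ B
        · rw [Set.indicator_of_mem hw]
          exact prob_le_one.trans le_self_add
        · rw [Set.indicator_of_notMem hw, zero_add]
          exact no_badBlock_le μ (hjm w) k hτ (not_lt.1 hw) (hbm w)
    _ = _ := by
        rw [lintegral_add_right _ measurable_const, lintegral_indicator_one hBm, lintegral_const,
          measure_univ, mul_one]

end Sat

/-! ### An explicit bound above the threshold -/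

section Bound
variable {d n1 k n m : ℕ} {p c c0 : ℝ}

/-- Bound for the probability of satisfiability in the supercritical case, with all parameters
explicit. -/
lemma sat_bound (φ : Fin n1 ⊕ (Fin k × Fin 3) ≃ Fin n) (h : Params n1 m p c c0) {r : ℝ}
    (hr : 0 ≤ r) (hr' : 2 * r ≤ 1) (hp : p = (2 * r) ^ d) (hmn : m ^ 2 ≤ n1) (hm : 1 ≤ m)
    (hL : 1 ≤ p * c ^ m) {δ : ℝ}
    (hδ : δ = m ^ 2 / n1 + (2 * r * d * (m + 1) + 4 * (m + 1) ^ 2 * p)) (hδ' : δ ≤ 1 / 2) :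
    placementMeasure d n {ω | GeomSatisfiable d 2 n r ω} ≤
      ENNReal.ofReal (8 * (δ + 4 * m ^ 2 * p / (1 - 1 / c0))) + ENNReal.ofReal (1 / m) +
      ENNReal.ofReal ((1 - ((1 - 1 / c0) / (56 * m ^ 3)) ^ 4) ^ k) := by
  obtain ⟨hg0, hg1⟩ := h.hpos
  have hp0 := h.hp
  have hm1 : (1:ℝ) ≤ m := by exact_mod_cast hm
  have hn1 : 1 ≤ n1 := le_trans (by nlinarith) hmn
  have hn1' : (1:ℝ) ≤ n1 := by exact_mod_cast hn1
  have hc1 : 1 ≤ c := h.hc0.le.trans h.hcc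
  set g := 1 - 1 / c0 with hg
  refine (sat_le φ hr m (τ := g / (56 * m ^ 3)) (by positivity)).trans ?_
  gcongr
  set μ := unitCubeMeasure d with hμ
  have hle : ∀ a, μ (Metric.closedBall a r) ≤ ENNReal.ofReal p := fun a => hp ▸ cube_ball_le hr a
  have hfin : ∫⁻ w, ∫⁻ e, numPaths (Fin d → ℝ) n1 r m (w, e) ∂Measure.pi (fun _ => μ)
      ∂Measure.pi (fun _ => μ) ≠ ⊤ := by
    rw [lintegral_numPaths]
    exact ENNReal.sum_ne_top.2 fun z _ => measure_ne_top _ _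
  have h1 := first_moment μ h r (q := (1 - 2 * r) ^ d) (by
      have : 0 ≤ 1 - 2 * r := by linarith
      positivity) hmn hn1
    (Set.Icc (fun _ => r) (fun _ => 1 - r)) measurableSet_Icc (cube_inner hr hr')
    (fun a ha => hp ▸ cube_ball_ge hr ha) hle
  have hδ0 : 0 ≤ δ := by rw [hδ]; positivity
  have hq : 1 - 2 * r * d * (m + 1) ≤ ((1 - 2 * r) ^ d) ^ (m + 1) := by
    rw [← pow_mul]
    have := one_add_mul_le_pow (a := -(2 * r)) (by linarith) (d * (m + 1))
    push_cast at this
    rw [sub_eq_add_neg 1 (2 * r)]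
    linarith
  have h2 : 1 - δ ≤ (1 - (m:ℝ) ^ 2 / n1) *
      (((1 - 2 * r) ^ d) ^ (m + 1) - 4 * (m + 1) ^ 2 * p) := by
    have hA0 : 0 ≤ (m:ℝ) ^ 2 / n1 := by positivity
    have hA1 : (m:ℝ) ^ 2 / n1 ≤ 1 := by
      rw [div_le_one (by linarith)]; exact_mod_cast hmn
    have hB0 : 0 ≤ 2 * r * d * (m + 1) + 4 * (m + 1) ^ 2 * p := by positivity
    have h3 : (1 - (m:ℝ) ^ 2 / n1) * (1 - (2 * r * d * (m + 1) + 4 * (m + 1) ^ 2 * p)) ≤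
        (1 - (m:ℝ) ^ 2 / n1) * (((1 - 2 * r) ^ d) ^ (m + 1) - 4 * (m + 1) ^ 2 * p) :=
      mul_le_mul_of_nonneg_left (by linarith) (by linarith)
    refine le_trans ?_ h3
    rw [hδ]
    nlinarith [mul_nonneg hA0 hB0]
  have h1' := (ENNReal.ofReal_le_ofReal (mul_le_mul_of_nonneg_left h2
    (by positivity : 0 ≤ p * c ^ m))).trans h1
  have hs1 := second_moment_one μ h r hle
  have hs2 := second_moment_two μ h r hle
  rw [← hg] at hs1 hs2
  have hs2' : ∫⁻ w, ∫⁻ e, numPaths (Fin d → ℝ) n1 r m (w, e) ^ 2 ∂Measure.pi (fun _ => μ)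
      ∂Measure.pi (fun _ => μ) ≤
    (∫⁻ w, ∫⁻ e, numPaths (Fin d → ℝ) n1 r m (w, e) ∂Measure.pi (fun _ => μ)
      ∂Measure.pi (fun _ => μ)) * ENNReal.ofReal (1 + 6 * m ^ 2 / g * (p * c ^ m)) := by
    refine hs2.trans ?_
    have h3 : 2 * (1 + 2 * (m:ℝ) ^ 2) ≤ 6 * m ^ 2 := by nlinarith
    have h4 : 2 * (1 + 2 * (m:ℝ) ^ 2) / g * (p * c ^ m) ≤ 6 * m ^ 2 / g * (p * c ^ m) := by gcongr
    refine mul_le_mul_right (ENNReal.ofReal_le_ofReal ?_) _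
    linarith
  have := support_large (Measure.pi fun _ => μ) (Measure.pi fun _ => μ)
    (measurable_numPaths (X := Fin d → ℝ) (n := n1) r m) (P := 6 * m ^ 2 / g) (K := m) hL hδ0 hδ'
    (δ₂ := 4 * m ^ 2 * p / g) (by positivity) (by positivity) (by linarith) hfin h1' hs1 hs2'
  refine le_trans (measure_mono fun w hw => ?_) this
  refine lt_of_lt_of_le hw (ENNReal.ofReal_le_ofReal ?_)
  rw [div_le_div_iff₀ (by positivity) (by positivity), one_mul]
  have h5 : g * (1 + 6 * (m:ℝ) ^ 2 / g) ≤ 7 * m ^ 2 := by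
    have : g * (1 + 6 * (m:ℝ) ^ 2 / g) = g + 6 * m ^ 2 := by field_simp
    rw [this]; nlinarith
  have h6 := mul_le_mul_of_nonneg_left h5 (by positivity : (0:ℝ) ≤ 8 * (m:ℝ))
  refine le_trans (le_of_eq ?_) (h6.trans (le_of_eq ?_)) <;> ring

end Bound

/-! ### Asymptotics of the path length -/

section Asymptotics

/-- Length of the paths: the least `m` with `c0 ^ m ≥ 2 n`. -/
noncomputable def len (c0 : ℝ) (n : ℕ) : ℕ := ⌈Real.log (2 * n) / Real.log c0⌉₊

lemma len_pow {c0 : ℝ} (h : 1 < c0) {n : ℕ} (hn : 1 ≤ n) : 2 * (n:ℝ) ≤ c0 ^ len c0 n := by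
  have hl : 0 < Real.log c0 := Real.log_pos h
  have hn' : (0:ℝ) < n := by exact_mod_cast hn
  have h1 : Real.log (2 * n) / Real.log c0 ≤ len c0 n := Nat.le_ceil _
  rw [div_le_iff₀ hl] at h1
  rw [← Real.log_le_log_iff (by positivity) (by positivity), Real.log_pow]
  exact h1

lemma len_tendsto {c0 : ℝ} (h : 1 < c0) : Tendsto (fun n => (len c0 n : ℝ)) atTop atTop := by
  have hl : 0 < Real.log c0 := Real.log_pos h
  refine tendsto_atTop_mono (fun n => Nat.le_ceil _) ?_
  refine Tendsto.atTop_div_const hl ?_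
  exact Real.tendsto_log_atTop.comp
    (tendsto_natCast_atTop_atTop.const_mul_atTop two_pos)

lemma len_small {c0 : ℝ} (h : 1 < c0) {s : ℝ} (hs : 0 < s) :
    Tendsto (fun n : ℕ => ((len c0 n : ℝ) + 1) * (n:ℝ) ^ (-s)) atTop (nhds 0) := by
  have hl : 0 < Real.log c0 := Real.log_pos h
  have h1 : Tendsto (fun n : ℕ => (n:ℝ) ^ (-s)) atTop (nhds 0) :=
    (tendsto_rpow_neg_atTop hs).comp tendsto_natCast_atTop_atTop
  have h2 : Tendsto (fun n : ℕ => Real.log n * (n:ℝ) ^ (-s)) atTop (nhds 0) := by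
    have := ((isLittleO_log_rpow_atTop hs).tendsto_div_nhds_zero).comp tendsto_natCast_atTop_atTop
    refine this.congr fun n => ?_
    simp only [Function.comp_apply]
    rw [Real.rpow_neg (Nat.cast_nonneg n), div_eq_mul_inv]
  have h3 : Tendsto (fun n : ℕ => (Real.log 2 / Real.log c0 + 2) * (n:ℝ) ^ (-s) +
      1 / Real.log c0 * (Real.log n * (n:ℝ) ^ (-s))) atTop (nhds 0) := by
    simpa using (h1.const_mul (Real.log 2 / Real.log c0 + 2)).add (h2.const_mul (1 / Real.log c0))
  refine squeeze_zero' (Eventually.of_forall fun n => by positivity) ?_ h3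
  filter_upwards [eventually_ge_atTop 1] with n hn
  have hn' : (1:ℝ) ≤ n := by exact_mod_cast hn
  have h4 : (len c0 n : ℝ) ≤ Real.log (2 * n) / Real.log c0 + 1 :=
    (Nat.ceil_lt_add_one (div_nonneg (Real.log_nonneg (by linarith)) hl.le)).le
  rw [Real.log_mul two_ne_zero (by positivity)] at h4
  have h5 : (len c0 n : ℝ) + 1 ≤ (Real.log 2 / Real.log c0 + 2) + 1 / Real.log c0 * Real.log n := by
    refine (add_le_add_left h4 1).trans (le_of_eq ?_)
    ring
  calc _ ≤ ((Real.log 2 / Real.log c0 + 2) + 1 / Real.log c0 * Real.log n) * (n:ℝ) ^ (-s) := by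
        gcongr
    _ = _ := by ring

lemma sq_rpow_half (n : ℕ) : ((n:ℝ) ^ (-(1 / 2 : ℝ))) ^ 2 = 1 / n := by
  rw [← Real.rpow_natCast, ← Real.rpow_mul (Nat.cast_nonneg n)]
  norm_num [Real.rpow_neg_one]

/-- The probability that no block is contradictory tends to zero. -/
lemma blocks_tendsto {c0 η g : ℝ} (h : 1 < c0) (hη : 0 < η) (hg : 0 < g) (hg1 : g ≤ 1) :
    Tendsto (fun n : ℕ => (1 - (g / (56 * (len c0 n : ℝ) ^ 3)) ^ 4) ^ ⌊η * n⌋₊) atTop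
      (nhds 0) := by
  set u : ℕ → ℝ := fun n => ((len c0 n : ℝ) + 1) * (n:ℝ) ^ (-(1/12) : ℝ) with hu
  have hu0 : Tendsto u atTop (nhds 0) := len_small h (by norm_num)
  have hupos : ∀ᶠ n in atTop, 0 < u n := by
    filter_upwards [eventually_ge_atTop 1] with n hn
    have hn' : (0:ℝ) < n := by exact_mod_cast hn
    positivity
  have h1 : Tendsto (fun n => (u n ^ 12)⁻¹) atTop atTop := by
    refine Tendsto.comp tendsto_inv_nhdsGT_zero (tendsto_nhdsWithin_iff.2 ⟨?_, ?_⟩)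
    · simpa using hu0.pow 12
    · filter_upwards [hupos] with n hn using pow_pos hn 12
  have h2 : Tendsto (fun n => Real.exp (-((g / 56) ^ 4 * (η / 2) * (u n ^ 12)⁻¹))) atTop (nhds 0) :=
    Real.tendsto_exp_neg_atTop_nhds_zero.comp (h1.const_mul_atTop (by positivity))
  have hlen := (len_tendsto h).eventually_ge_atTop 1
  have hbase : ∀ᶠ n in atTop, 0 ≤ 1 - (g / (56 * (len c0 n : ℝ) ^ 3)) ^ 4 := by
    filter_upwards [hlen] with n hm
    have : g / (56 * (len c0 n : ℝ) ^ 3) ≤ 1 := by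
      have h3 : (1:ℝ) ≤ (len c0 n : ℝ) ^ 3 := one_le_pow₀ hm
      rw [div_le_one (by positivity)]; linarith
    have := pow_le_one₀ (n := 4) (by positivity) this
    linarith
  refine squeeze_zero' (hbase.mono fun n hn => pow_nonneg hn _) ?_ h2
  have hbig : ∀ᶠ n : ℕ in atTop, 2 ≤ η * n :=
    (tendsto_natCast_atTop_atTop.const_mul_atTop hη).eventually_ge_atTop 2
  filter_upwards [hbase, hlen, hbig, eventually_ge_atTop 1] with n hb hm hbn hn
  have hn' : (0:ℝ) < n := by exact_mod_cast hn
  set m : ℝ := (len c0 n : ℝ) with hmdef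
  have hk : η / 2 * n ≤ (⌊η * n⌋₊ : ℝ) := by
    have := Nat.lt_floor_add_one (η * n)
    linarith
  have h12 : u n ^ 12 = (m + 1) ^ 12 / n := by
    simp only [hu, mul_pow]
    rw [← Real.rpow_natCast ((n:ℝ) ^ (-(1/12) : ℝ)), ← Real.rpow_mul hn'.le]
    norm_num [Real.rpow_neg_one, div_eq_mul_inv]
    exact Or.inl rfl
  set t := (g / (56 * m ^ 3)) ^ 4 with ht
  have hm0 : 0 < m := by linarith
  have ht' : (g / 56) ^ 4 / (m + 1) ^ 12 ≤ t := by
    have : t = (g / 56) ^ 4 / m ^ 12 := by rw [ht]; field_simp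
    rw [this]
    gcongr
    linarith
  calc (1 - t) ^ ⌊η * n⌋₊ ≤ Real.exp (-t) ^ ⌊η * n⌋₊ := by
        refine pow_le_pow_left₀ hb ?_ _
        have := Real.add_one_le_exp (-t)
        linarith
    _ = Real.exp (-(t * ⌊η * n⌋₊)) := by rw [← Real.exp_nat_mul]; congr 1; ring
    _ ≤ _ := by
        refine Real.exp_le_exp.2 (neg_le_neg ?_)
        calc _ = (g / 56) ^ 4 / (m + 1) ^ 12 * (η / 2 * n) := by
              rw [h12]; field_simp
          _ ≤ t * ⌊η * n⌋₊ := by gcongr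

end Asymptotics

/-! ### The supercritical regime -/

section Supercritical

/-- Above the threshold `C = 2 (2γ)^d > 1`. A fraction `3η` of the variables is reserved for blocks, so
small that the mean number of successors among the remaining literals is still at least
`c0 = (1 + C) / 2 > 1`; paths of length `O(log n)` then join a fraction of order `1 / (log n) ^ 3` of
all pairs of points, which is enough for one of the `η n` blocks to be contradictory. -/
lemma supercritical {d : ℕ} (hd : 1 ≤ d) {ε γ : ℝ} (hε : 0 < ε)
    (h : γ ≥ (2:ℝ) ^ (-(1 + 1 / (d:ℝ))) + ε) :
    Tendsto (fun n : ℕ => placementMeasure d n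
            {ω | GeomSatisfiable d 2 n (γ * (n:ℝ) ^ (-(1:ℝ)/(d:ℝ))) ω})
        atTop (nhds 0) := by
  have hz : (0:ℝ) < (2:ℝ) ^ (-(1 + 1 / (d:ℝ))) := by positivity
  have hγ : 0 < γ := by linarith
  have hdpos : (0:ℝ) < d := by exact_mod_cast hd
  obtain ⟨C, hC⟩ : ∃ C, C = 2 * (2 * γ) ^ d := ⟨_, rfl⟩
  have hC1 : 1 < C := by
    have : 1 / 2 < (2 * γ) ^ d := by
      rw [← crit_pow hd]
      exact pow_lt_pow_left₀ (by linarith) (by positivity) (by omega)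
    linarith
  obtain ⟨c0, hc0⟩ : ∃ c0, c0 = (1 + C) / 2 := ⟨_, rfl⟩
  have hc01 : 1 < c0 := by linarith
  obtain ⟨η, hη⟩ : ∃ η, η = (C - 1) / (6 * C) := ⟨_, rfl⟩
  have hη0 : 0 < η := by rw [hη]; apply div_pos <;> linarith
  have hηC : 6 * η * C = C - 1 := by rw [hη]; field_simp
  have hη6 : 6 * η < 1 := by
    have : 6 * η = (C - 1) / C := by rw [hη]; field_simp
    rw [this, div_lt_one (by linarith)]; linarith
  obtain ⟨g, hg⟩ : ∃ g, g = 1 - 1 / c0 := ⟨_, rfl⟩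
  have hinv : 0 < 1 / c0 := by positivity
  have hg0 : 0 < g := by
    have : 1 / c0 < 1 := by rw [div_lt_one (by linarith)]; exact hc01
    linarith
  have hg1 : g ≤ 1 := by linarith
  let m : ℕ → ℕ := len c0
  let v : ℕ → ℝ := fun n => ((m n : ℝ) + 1) * (n:ℝ) ^ (-(1 / 2 : ℝ))
  let w : ℕ → ℝ := fun n => ((m n : ℝ) + 1) * (n:ℝ) ^ (-(1 / d : ℝ))
  have hv : Tendsto v atTop (nhds 0) := len_small hc01 (by norm_num)
  have hw : Tendsto w atTop (nhds 0) := len_small hc01 (by positivity)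
  have hmt : Tendsto (fun n => (m n : ℝ)) atTop atTop := len_tendsto hc01
  have hB := blocks_tendsto hc01 hη0 hg0 hg1
  let D : ℕ → ℝ := fun n => 2 * v n ^ 2 + (2 * γ * d * w n + 2 * C * v n ^ 2)
  have hD : Tendsto D atTop (nhds 0) := by
    have := ((hv.pow 2).const_mul 2).add
      ((hw.const_mul (2 * γ * d)).add ((hv.pow 2).const_mul (2 * C)))
    simpa using this
  let E : ℕ → ℝ := fun n => 2 * C * v n ^ 2
  have hE : Tendsto E atTop (nhds 0) := by simpa using (hv.pow 2).const_mul (2 * C)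
  have hr0 : Tendsto (fun n : ℕ => 2 * (γ * (n:ℝ) ^ (-(1:ℝ)/(d:ℝ)))) atTop (nhds 0) := by
    have h1 : Tendsto (fun n : ℕ => (n:ℝ) ^ (-(1 / (d:ℝ)))) atTop (nhds 0) :=
      (tendsto_rpow_neg_atTop (by positivity)).comp tendsto_natCast_atTop_atTop
    simpa [neg_div] using (h1.const_mul γ).const_mul 2
  have hlim : Tendsto (fun n => ENNReal.ofReal (8 * (D n + E n / g)) + ENNReal.ofReal (1 / m n) +
      ENNReal.ofReal ((1 - (g / (56 * (m n : ℝ) ^ 3)) ^ 4) ^ ⌊η * n⌋₊)) atTop (nhds 0) := by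
    have h1 : Tendsto (fun n => 8 * (D n + E n / g)) atTop (nhds 0) := by
      simpa using (hD.add (hE.div_const g)).const_mul 8
    have h2 : Tendsto (fun n => 1 / (m n : ℝ)) atTop (nhds 0) := by
      simp only [one_div]
      exact hmt.inv_tendsto_atTop
    simpa using ((ENNReal.tendsto_ofReal h1).add (ENNReal.tendsto_ofReal h2)).add
      (ENNReal.tendsto_ofReal hB)
  refine tendsto_of_tendsto_of_tendsto_of_le_of_le' tendsto_const_nhds hlim
    (Eventually.of_forall fun n => zero_le) ?_
  filter_upwards [eventually_ge_atTop 1, hmt.eventually_ge_atTop 1,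
    hD.eventually_le_const (by norm_num : (0:ℝ) < 1 / 2), hE.eventually_le_const hg0,
    hr0.eventually_le_const one_pos] with n hn hm hDn hEn hrn
  have hn' : (0:ℝ) < n := by exact_mod_cast hn
  have hk : (⌊η * n⌋₊ : ℝ) ≤ η * n := Nat.floor_le (by positivity)
  generalize ⌊η * n⌋₊ = k at hk ⊢
  have hηn : 6 * η * n < n := by nlinarith
  have hkn : k * 3 ≤ n := by
    have : ((k * 3 : ℕ) : ℝ) ≤ n := by push_cast; linarith
    exact_mod_cast this
  obtain ⟨n1, hn1⟩ : ∃ n1, n1 = n - k * 3 := ⟨_, rfl⟩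
  have hn1r : (n1 : ℝ) = n - k * 3 := by rw [hn1, Nat.cast_sub hkn]; push_cast; ring
  have hhalf : (n:ℝ) / 2 ≤ n1 := by rw [hn1r]; linarith
  let φ : Fin n1 ⊕ (Fin k × Fin 3) ≃ Fin n :=
    (((Equiv.refl _).sumCongr finProdFinEquiv).trans finSumFinEquiv).trans (finCongr (by omega))
  have hv2 : v n ^ 2 = ((m n : ℝ) + 1) ^ 2 / n := by
    simp only [v, mul_pow, sq_rpow_half]; ring
  obtain ⟨r, hrd⟩ : ∃ r, r = γ * (n:ℝ) ^ (-(1:ℝ)/(d:ℝ)) := ⟨_, rfl⟩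
  have hp : C / (2 * n) = (2 * r) ^ d := by
    rw [hrd, radius_pow hd γ hn, hC]; field_simp
  rw [← hrd] at hrn ⊢
  have hrpos : 0 ≤ r := by rw [hrd]; positivity
  have hE4 : 4 * (m n : ℝ) ^ 2 * (C / (2 * n)) ≤ E n := by
    have : E n = 4 * ((m n : ℝ) + 1) ^ 2 * (C / (2 * n)) := by
      simp only [E, hv2]; field_simp; ring
    rw [this]
    gcongr
    linarith
  have hcc : c0 ≤ 2 * n1 * (C / (2 * n)) := by
    have : 2 * n1 * (C / (2 * n)) = n1 * C / n := by field_simp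
    rw [this, le_div_iff₀ hn', hn1r, hc0]
    nlinarith [mul_le_mul_of_nonneg_right hk (by linarith : 0 ≤ C)]
  have hpar : Params n1 (m n) (C / (2 * n)) (2 * n1 * (C / (2 * n))) c0 :=
    ⟨by positivity, rfl, hc01, hcc, by rw [← hg]; exact hE4.trans hEn⟩
  have hmpow : 2 * (n:ℝ) ≤ c0 ^ m n := len_pow hc01 hn
  have hL : 1 ≤ C / (2 * n) * (2 * n1 * (C / (2 * n))) ^ m n := by
    have h1 : c0 ^ m n ≤ (2 * n1 * (C / (2 * n))) ^ m n :=
      pow_le_pow_left₀ (by linarith) hcc _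
    calc (1:ℝ) ≤ C := hC1.le
      _ = C / (2 * n) * (2 * n) := by field_simp
      _ ≤ _ := mul_le_mul_of_nonneg_left (hmpow.trans h1) (by positivity)
  have hdn : (m n : ℝ) ^ 2 / n1 ≤ 2 * v n ^ 2 := by
    rw [hv2]
    calc (m n : ℝ) ^ 2 / n1 ≤ ((m n : ℝ) + 1) ^ 2 / (n / 2) := by gcongr; linarith
      _ = _ := by field_simp
  have hδD : (m n : ℝ) ^ 2 / n1 + (2 * r * d * (m n + 1) + 4 * (m n + 1) ^ 2 * (C / (2 * n)))
      ≤ D n := by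
    refine add_le_add hdn (le_of_eq ?_)
    rw [hv2, hrd]
    simp only [w, neg_div]
    field_simp
    ring
  have hmn : m n ^ 2 ≤ n1 := by
    have h1 : (m n : ℝ) ^ 2 / n1 ≤ 1 := by
      have : 0 ≤ 2 * γ * d * w n + 2 * C * v n ^ 2 := by
        have : 0 ≤ w n := by simp only [w]; positivity
        positivity
      have : D n = 2 * v n ^ 2 + (2 * γ * d * w n + 2 * C * v n ^ 2) := rfl
      linarith
    rw [div_le_one (by linarith)] at h1
    exact_mod_cast h1
  have := sat_bound φ hpar hrpos hrn hp hmn (by exact_mod_cast hm) hL rfl (hδD.trans hDn)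
  rw [← hg] at this
  refine this.trans ?_
  gcongr

end Supercritical

theorem sharp_threshold_geometric_2SAT (d : ℕ) (hd : 1 ≤ d) (ε : ℝ) (hε : 0 < ε) (γ : ℝ) :
    ((0 < γ ∧ γ ≤ (2:ℝ) ^ (-(1 + 1/(d:ℝ))) - ε) →
      Tendsto (fun n : ℕ =>
          placementMeasure d n
            {ω | GeomSatisfiable d 2 n (γ * (n:ℝ) ^ (-(1:ℝ)/(d:ℝ))) ω})
        atTop (nhds 1)) ∧
    (γ ≥ (2:ℝ) ^ (-(1 + 1/(d:ℝ))) + ε →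
      Tendsto (fun n : ℕ =>
          placementMeasure d n
            {ω | GeomSatisfiable d 2 n (γ * (n:ℝ) ^ (-(1:ℝ)/(d:ℝ))) ω})
        atTop (nhds 0)) := by
  exact ⟨fun h => subcritical hd hε h.1 h.2, fun h => supercritical hd hε h⟩
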